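/- arXiv:2006.12058 — 6 statements merged into one kernel-verified Lean document; each statement's English description precedes it below -/
import Mathlib

section
/- Let A ⊂ ℝ^d be a bounded set and suppose conv(A) ⊇ B(y, r) for some y ∈ ℝ^d and r > 0. Then for every R > diam(A)²/r and every z ∈ ℝ^d, B(z, R) + A ⊇ B(z, R) + B(y, r/2), where the sums are Minkowski sums. -/
/-!
Fix a point `p` at distance `t` from the centre `y`. Since `closedBall y r ⊆ convexHull ℝ A`, some
`a ∈ A` lies at least `r` ahead of `y` in the direction of `p`, so expanding `‖p - a‖ ^ 2` about `y`
gives `dist p a ^ 2 ≤ t ^ 2 - 2 * r * t + diam A ^ 2`. The right-hand side is convex in `t`, hence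
on `[0, R + ρ]` it is at most `R ^ 2` as soon as it is so at the two endpoints. The endpoint `0`
asks for `diam A ≤ R`, and the endpoint `R + ρ` for `diam A ^ 2 ≤ 2 * (r - ρ) * R` up to terms of
the favourable sign; `ρ = r / 2` turns the latter into `diam A ^ 2 ≤ r * R`.
-/

open Metric Set
open scoped Pointwise

section NormedSpace

variable {E : Type*} [NormedAddCommGroup E] [NormedSpace ℝ E] {A : Set E} {y : E} {r : ℝ}

lemma two_mul_le_diam_of_closedBall_subset_convexHull [Nontrivial E]
    (hA : Bornology.IsBounded A) (hr : 0 ≤ r) (hconv : closedBall y r ⊆ convexHull ℝ A) :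
    2 * r ≤ diam A := by
  rw [← diam_closedBall_eq y hr, ← convexHull_diam A]
  exact diam_mono hconv (isBounded_convexHull.mpr hA)

lemma diam_le_of_diam_sq_div_le {c R : ℝ} (hA : Bornology.IsBounded A)
    (hconv : closedBall y r ⊆ convexHull ℝ A) (hc : 0 < c) (hcr : c ≤ 2 * r)
    (hR : diam A ^ 2 / c ≤ R) : diam A ≤ R := by
  have hR0 : 0 ≤ R := le_trans (by positivity) hR
  rcases subsingleton_or_nontrivial E with _ | _
  · rwa [diam_subsingleton A.subsingleton_of_subsingleton]
  have hcD : c ≤ diam A :=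
    hcr.trans (two_mul_le_diam_of_closedBall_subset_convexHull hA (by linarith) hconv)
  refine le_of_mul_le_mul_right ?_ (hc.trans_le hcD)
  calc diam A * diam A = diam A ^ 2 := (sq _).symm
    _ ≤ R * c := (div_le_iff₀ hc).mp hR
    _ ≤ R * diam A := by gcongr

lemma subset_closedBall_diam_of_mem_convexHull (hA : Bornology.IsBounded A)
    (hy : y ∈ convexHull ℝ A) : A ⊆ closedBall y (diam A) := by
  intro a ha
  rw [mem_closedBall, ← convexHull_diam A]
  exact dist_le_diam_of_mem (isBounded_convexHull.mpr hA) (subset_convexHull ℝ A ha) hy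

end NormedSpace

section InnerProductSpace

variable {E : Type*} [NormedAddCommGroup E] [InnerProductSpace ℝ E] {A : Set E} {y : E}
  {r s D R : ℝ}

lemma exists_inner_le_inner_of_mem_convexHull {x : E} (hx : x ∈ convexHull ℝ A) (w : E) :
    ∃ a ∈ A, inner ℝ w x ≤ inner ℝ w a :=
  ((innerₗ E w).convexOn (convex_convexHull ℝ A)).exists_ge_of_mem_convexHull
    (subset_convexHull ℝ A) hx

lemma exists_mul_norm_le_inner_sub_of_closedBall_subset_convexHull (hr : 0 ≤ r)
    (hconv : closedBall y r ⊆ convexHull ℝ A) (w : E) :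
    ∃ a ∈ A, r * ‖w‖ ≤ inner ℝ w (a - y) := by
  rcases eq_or_ne w 0 with rfl | hw
  · obtain ⟨a, ha⟩ := convexHull_nonempty_iff.mp ⟨y, hconv (mem_closedBall_self hr)⟩
    exact ⟨a, ha, by simp⟩
  have hw' : ‖w‖ ≠ 0 := norm_ne_zero_iff.mpr hw
  have hmem : y + (r / ‖w‖) • w ∈ closedBall y r := by
    rw [mem_closedBall, dist_self_add_left, norm_smul, norm_div, norm_norm,
      Real.norm_of_nonneg hr, div_mul_cancel₀ _ hw']
  obtain ⟨a, ha, hle⟩ := exists_inner_le_inner_of_mem_convexHull (hconv hmem) w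
  refine ⟨a, ha, ?_⟩
  calc r * ‖w‖ = inner ℝ w (y + (r / ‖w‖) • w) - inner ℝ w y := by
        rw [inner_add_right, inner_smul_right, real_inner_self_eq_norm_sq]
        field_simp
        ring
    _ ≤ inner ℝ w a - inner ℝ w y := sub_le_sub_right hle _
    _ = inner ℝ w (a - y) := (inner_sub_right w a y).symm

lemma exists_dist_sq_le_of_closedBall_subset_convexHull (hr : 0 ≤ r)
    (hAD : A ⊆ closedBall y D) (hconv : closedBall y r ⊆ convexHull ℝ A) (p : E) :
    ∃ a ∈ A, dist p a ^ 2 ≤ dist p y ^ 2 - 2 * r * dist p y + D ^ 2 := by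
  obtain ⟨a, ha, hinner⟩ :=
    exists_mul_norm_le_inner_sub_of_closedBall_subset_convexHull hr hconv (p - y)
  have haD : ‖a - y‖ ≤ D := mem_closedBall_iff_norm.mp (hAD ha)
  refine ⟨a, ha, ?_⟩
  calc dist p a ^ 2 = ‖(p - y) - (a - y)‖ ^ 2 := by rw [sub_sub_sub_cancel_right, dist_eq_norm]
    _ = ‖p - y‖ ^ 2 - 2 * inner ℝ (p - y) (a - y) + ‖a - y‖ ^ 2 := norm_sub_sq_real _ _
    _ ≤ ‖p - y‖ ^ 2 - 2 * (r * ‖p - y‖) + D ^ 2 := by gcongr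
    _ = dist p y ^ 2 - 2 * r * dist p y + D ^ 2 := by rw [dist_eq_norm, mul_assoc]

lemma closedBall_subset_iUnion_closedBall_of_subset_convexHull (hr : 0 ≤ r)
    (hAD : A ⊆ closedBall y D) (hconv : closedBall y r ⊆ convexHull ℝ A) (hDR : D ≤ R)
    (hs : s ^ 2 - 2 * r * s + D ^ 2 ≤ R ^ 2) :
    closedBall y s ⊆ ⋃ a ∈ A, closedBall a R := by
  intro p hp
  obtain ⟨a, ha, hdist⟩ := exists_dist_sq_le_of_closedBall_subset_convexHull hr hAD hconv p
  have hD : 0 ≤ D := dist_nonneg.trans (hAD ha)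
  have hDR_sq : D ^ 2 ≤ R ^ 2 := by gcongr
  refine mem_iUnion₂_of_mem ha (abs_le_of_sq_le_sq' (hdist.trans ?_) (hD.trans hDR)).2
  rcases le_total (dist p y) (2 * r) with h | h
  · have hnonpos : dist p y * (dist p y - 2 * r) ≤ 0 :=
      mul_nonpos_of_nonneg_of_nonpos dist_nonneg (sub_nonpos.mpr h)
    linarith
  · have hps : dist p y ≤ s := hp
    have hmono : dist p y * (dist p y - 2 * r) ≤ s * (s - 2 * r) :=
      mul_le_mul hps (sub_le_sub_right hps _) (sub_nonneg.mpr h) (dist_nonneg.trans hps)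
    linarith

theorem ball_add_set_contains_ball_add_ball_general {ρ : ℝ} (hA : Bornology.IsBounded A)
    (hconv : closedBall y r ⊆ convexHull ℝ A) (hρr : ρ < r)
    (hR : diam A ^ 2 / (2 * (r - ρ)) ≤ R) (z : E) :
    closedBall z R + closedBall y ρ ⊆ closedBall z R + A := by
  rintro _ ⟨u, hu, v, hv, rfl⟩
  have hρ : 0 ≤ ρ := dist_nonneg.trans hv
  have hr : 0 ≤ r := hρ.trans hρr.le
  have hgap : 0 < 2 * (r - ρ) := by linarith
  have hDR := diam_le_of_diam_sq_div_le hA hconv hgap (by linarith) hR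
  rw [div_le_iff₀ hgap] at hR
  have hAD := subset_closedBall_diam_of_mem_convexHull hA (hconv (mem_closedBall_self hr))
  have hp : u - z + v ∈ closedBall y (R + ρ) := by
    rw [mem_closedBall_iff_norm] at hu hv ⊢
    rw [add_sub_assoc]
    exact norm_add_le_of_le hu hv
  have hquad : (R + ρ) ^ 2 - 2 * r * (R + ρ) + diam A ^ 2 ≤ R ^ 2 := by
    have hρ_term : 0 ≤ ρ * (2 * r - ρ) := mul_nonneg hρ (by linarith)
    linarith
  obtain ⟨a, ha, hpa⟩ := mem_iUnion₂.mp <|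
    closedBall_subset_iUnion_closedBall_of_subset_convexHull hr hAD hconv hDR hquad hp
  refine ⟨u + v - a, ?_, a, ha, sub_add_cancel _ _⟩
  rw [mem_closedBall_iff_norm] at hpa ⊢
  convert hpa using 2
  abel

end InnerProductSpace

/-- Let `A ⊆ ℝ^d` be bounded with `conv(A) ⊇ B(y, r)`. Then for every `R > diam(A)²/r`
and every `z`, `B(z,R) + A ⊇ B(z,R) + B(y, r/2)` (Minkowski sums). -/
theorem ball_add_set_contains_ball_add_ball {d : ℕ} (A : Set (EuclideanSpace ℝ (Fin d)))
    (hA : Bornology.IsBounded A) (y : EuclideanSpace ℝ (Fin d)) (r : ℝ) (hr : 0 < r)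
    (hconv : Metric.closedBall y r ⊆ convexHull ℝ A) :
    ∀ R : ℝ, Metric.diam A ^ 2 / r < R → ∀ z : EuclideanSpace ℝ (Fin d),
      Metric.closedBall z R + Metric.closedBall y (r / 2) ⊆ Metric.closedBall z R + A := by
  intro R hR z
  have hgap : 2 * (r - r / 2) = r := by ring
  exact ball_add_set_contains_ball_add_ball_general hA hconv (half_lt_self hr)
    (hgap.symm ▸ hR.le) z
end

section
/- Let E be a compact set in ℝ^d with τ(E) ≥ c > 0, and let N be the integer part of ((4 + c)/c)^d. Then for every x ∈ E and every 0 < r ≤ diam(E), there exist z ∈ ℝ^d and points y_1, …, y_N ∈ E ∩ B(x, r) such that conv({y_1, …, y_N}) ⊇ B(z, cr/2). -/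
open Metric Set

/-- The thickness of a compact set `E ⊆ ℝ^d`. -/
noncomputable def thickness {d : ℕ} (E : Set (EuclideanSpace ℝ (Fin d))) : ℝ :=
  sSup {c : ℝ | c ∈ Set.Icc (0 : ℝ) 1 ∧
    ∀ x ∈ E, ∀ r : ℝ, 0 < r → r ≤ Metric.diam E →
      ∃ y : EuclideanSpace ℝ (Fin d),
        Metric.closedBall y (c * r) ⊆ convexHull ℝ (Metric.closedBall x r ∩ E)}

/-!
A maximal `ε`-separated subset `T` of `K ⊆ B(x, r)` is an `ε`-net of `K`, and comparing volumes
bounds its cardinality by `((2r + ε) / ε) ^ d`. Since `K ⊆ T + B(0, ε)`, a ball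
`B(y, ρ + ε) = B(y, ρ) + B(0, ε)` inside `conv K` lies in `conv T + B(0, ε)`, and cancelling the
bounded summand leaves `B(y, ρ) ⊆ conv T`. The theorem is the case `ρ = ε = c r / 2`. The balls
provided by the thickness have radii arbitrarily close to `c r` only, but `conv T` is compact, so
their centres can be taken to the limit after passing from `K` to `T`.
-/

open Module MeasureTheory Bornology
open scoped NNReal ENNReal Pointwise

section Packing

variable {V : Type*} [NormedAddCommGroup V] [NormedSpace ℝ V] [FiniteDimensional ℝ V]

theorem card_le_of_isSeparated_of_subset_closedBall {x : V} {r : ℝ} (hr : 0 ≤ r) {ε : ℝ≥0}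
    (hε : 0 < ε) {T : Finset V} (hT : (T : Set V) ⊆ closedBall x r)
    (hsep : IsSeparated ε (T : Set V)) :
    (T.card : ℝ) ≤ ((2 * r + ε) / ε) ^ finrank ℝ V := by
  borelize V
  let μ : Measure V := Measure.addHaar
  have hε' : (0 : ℝ) < ε := hε
  have hdisj : (T : Set V).PairwiseDisjoint fun a => closedBall a (ε / 2 : ℝ) :=
    fun a ha b hb hab => by
      have hdist : (ε : ℝ≥0∞) < edist a b := hsep ha hb hab
      rw [edist_nndist, ENNReal.coe_lt_coe, ← NNReal.coe_lt_coe, coe_nndist] at hdist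
      exact closedBall_disjoint_closedBall (by linarith)
  have hsub : ⋃ a ∈ T, closedBall a (ε / 2 : ℝ) ⊆ closedBall x (r + ε / 2) :=
    iUnion₂_subset fun a ha =>
      closedBall_subset_closedBall' (by linarith [mem_closedBall.1 (hT ha)])
  have hvol : T.card * (ε / 2 : ℝ) ^ finrank ℝ V * μ.real (ball 0 1) ≤
      (r + ε / 2) ^ finrank ℝ V * μ.real (ball 0 1) :=
    calc T.card * (ε / 2 : ℝ) ^ finrank ℝ V * μ.real (ball 0 1)
        = μ.real (⋃ a ∈ T, closedBall a (ε / 2 : ℝ)) := by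
          rw [measureReal_biUnion_finset hdisj (fun a _ => measurableSet_closedBall)
            (fun a _ => measure_closedBall_lt_top.ne)]
          simp only [μ.addHaar_real_closedBall _ (half_pos hε').le, Finset.sum_const,
            nsmul_eq_mul, mul_assoc]
      _ ≤ μ.real (closedBall x (r + ε / 2)) := measureReal_mono hsub measure_closedBall_lt_top.ne
      _ = (r + ε / 2) ^ finrank ℝ V * μ.real (ball 0 1) :=
          μ.addHaar_real_closedBall x (by positivity)
  have hunit : 0 < μ.real (ball 0 1) :=
    ENNReal.toReal_pos (measure_ball_pos μ _ one_pos).ne' measure_ball_lt_top.ne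
  have hratio : (2 * r + ε) / ε = (r + ε / 2) / (ε / 2) := by field_simp
  rw [hratio, div_pow, le_div_iff₀ (by positivity)]
  exact le_of_mul_le_mul_right hvol hunit

theorem packingNumber_closedBall_le {x : V} {r : ℝ} (hr : 0 ≤ r) {ε : ℝ≥0} (hε : 0 < ε) :
    packingNumber ε (closedBall x r) ≤ ⌊((2 * r + ε) / ε) ^ finrank ℝ V⌋₊ := by
  refine iSup₂_le fun C hC => iSup_le fun hsep => ?_
  by_contra! hlt
  obtain ⟨T, hTC, hTcard⟩ := exists_subset_encard_eq (Order.add_one_le_of_lt hlt)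
  have hTfin : T.Finite := finite_of_encard_eq_coe (by exact_mod_cast hTcard)
  lift T to Finset V using hTfin
  have hle := Nat.le_floor <| card_le_of_isSeparated_of_subset_closedBall hr hε
    (hTC.trans hC) (hsep.subset hTC)
  rw [encard_coe_eq_coe_finsetCard] at hTcard
  norm_cast at hTcard
  omega

theorem exists_isCover_encard_le_of_subset_closedBall {K : Set V} {x : V} {r : ℝ} (hr : 0 ≤ r)
    (hK : K ⊆ closedBall x r) {ε : ℝ≥0} (hε : 0 < ε) :
    ∃ T ⊆ K, IsCover ε K T ∧ T.encard ≤ ⌊((2 * r + ε) / ε) ^ finrank ℝ V⌋₊ := by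
  have hpack : packingNumber ε K ≤ ⌊((2 * r + ε) / ε) ^ finrank ℝ V⌋₊ :=
    (iSup₂_le fun C hC => iSup_le fun hsep => hsep.encard_le_packingNumber (hC.trans hK)).trans
      (packingNumber_closedBall_le hr hε)
  have htop : packingNumber ε K ≠ ⊤ := (hpack.trans_lt (ENat.natCast_lt_top _)).ne
  exact ⟨maximalSeparatedSet ε K, maximalSeparatedSet_subset, isCover_maximalSeparatedSet htop,
    (encard_maximalSeparatedSet htop).trans_le hpack⟩

end Packing

/-- Rådström's cancellation law. -/
theorem subset_closure_of_add_subset_add_right {V : Type*} [AddCommGroup V] [Module ℝ V]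
    [TopologicalSpace V] [IsTopologicalAddGroup V] [ContinuousSMul ℝ V] [LocallyConvexSpace ℝ V]
    {A B C : Set V} (hB : Convex ℝ B) (hCne : C.Nonempty) (hCbdd : IsVonNBounded ℝ C)
    (h : A + C ⊆ B + C) : A ⊆ closure B := by
  intro a ha
  by_contra haB
  obtain ⟨f, u, hfB, hfa⟩ := geometric_hahn_banach_closed_point hB.closure isClosed_closure haB
  have hbdd : BddAbove (f '' C) :=
    ((NormedSpace.isVonNBounded_iff ℝ).1 (hCbdd.image f)).bddAbove
  obtain ⟨_, ⟨c, hc, rfl⟩, hfc⟩ :=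
    exists_lt_of_lt_csSup (hCne.image f) (sub_lt_self (sSup (f '' C)) (sub_pos.2 hfa))
  obtain ⟨b, hb, c', hc', hsum⟩ := h (add_mem_add ha hc)
  have hfsum : f b + f c' = f a + f c := by simpa using congrArg f hsum
  linarith [hfB b (subset_closure hb), le_csSup hbdd (mem_image_of_mem f hc')]

section Normed

variable {V : Type*} [NormedAddCommGroup V] [NormedSpace ℝ V]

theorem closedBall_subset_closure_convexHull_of_isCover {K T : Set V} {ε : ℝ≥0}
    (hT : IsCover ε K T) {y : V} {ρ : ℝ} (hball : closedBall y (ρ + ε) ⊆ convexHull ℝ K) :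
    closedBall y ρ ⊆ closure (convexHull ℝ T) := by
  have hK : K ⊆ T + closedBall 0 (ε : ℝ) := fun k hk => by
    obtain ⟨t, ht, hkt⟩ := mem_iUnion₂.1 (hT.subset_iUnion_closedBall hk)
    exact ⟨t, ht, k - t, by simpa [dist_eq_norm] using hkt, add_sub_cancel t k⟩
  refine subset_closure_of_add_subset_add_right (C := closedBall (0 : V) ε) (convex_convexHull ℝ T)
    (nonempty_closedBall.2 ε.coe_nonneg) (NormedSpace.isVonNBounded_closedBall ℝ V ε) ?_
  calc closedBall y ρ + closedBall 0 (ε : ℝ)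
      ⊆ closedBall y (ρ + ε) := by
        rintro _ ⟨p, hp, q, hq, rfl⟩
        simpa using (dist_add_add_le p q y 0).trans (add_le_add hp hq)
    _ ⊆ convexHull ℝ K := hball
    _ ⊆ convexHull ℝ (T + closedBall 0 (ε : ℝ)) := convexHull_mono hK
    _ = convexHull ℝ T + closedBall 0 (ε : ℝ) := by
        rw [convexHull_add, (convex_closedBall 0 (ε : ℝ)).convexHull_eq]

theorem exists_closedBall_subset_of_forall_lt {C : Set V} (hC : IsCompact C) {ρ : ℝ} (hρ : 0 < ρ)
    (h : ∀ ρ' < ρ, ∃ y, closedBall y ρ' ⊆ C) : ∃ z, closedBall z ρ ⊆ C := by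
  -- The case `C = univ` is separate because of the convention `infDist z ∅ = 0`.
  rcases Cᶜ.eq_empty_or_nonempty with hempty | hcompl
  · exact ⟨0, by simp [compl_empty_iff.1 hempty]⟩
  have hCne : C.Nonempty := by
    obtain ⟨y, hy⟩ := h 0 hρ
    exact ⟨y, hy (mem_closedBall_self le_rfl)⟩
  obtain ⟨z, -, hz⟩ := hC.exists_isMaxOn hCne (continuous_infDist_pt Cᶜ).continuousOn
  have hdist : ρ ≤ infDist z Cᶜ := le_of_forall_lt_imp_le_of_dense fun ρ' hρ' => by
    rcases lt_or_ge ρ' 0 with hneg | hnonneg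
    · exact hneg.le.trans infDist_nonneg
    obtain ⟨y, hy⟩ := h ρ' hρ'
    have hy_dist : ρ' ≤ infDist y Cᶜ := (le_infDist hcompl).2 fun p hp =>
      (not_le.1 fun hle => hp (hy (mem_closedBall'.2 hle))).le
    exact hy_dist.trans (hz (hy (mem_closedBall_self hnonneg)))
  refine ⟨z, ?_⟩
  rw [← closure_ball z hρ.ne']
  exact closure_minimal ((ball_subset_ball hdist).trans ball_infDist_compl_subset) hC.isClosed

theorem exists_subset_encard_le_closedBall_subset_convexHull [FiniteDimensional ℝ V] {K : Set V}
    {x : V} {r : ℝ} (hr : 0 ≤ r) (hK : K ⊆ closedBall x r) {ρ : ℝ} (hρ : 0 < ρ) {ε : ℝ≥0}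
    (hε : 0 < ε) (hball : ∀ ρ' < ρ + ε, ∃ y, closedBall y ρ' ⊆ convexHull ℝ K) :
    ∃ T ⊆ K, T.encard ≤ ⌊((2 * r + ε) / ε) ^ finrank ℝ V⌋₊ ∧
      ∃ z, closedBall z ρ ⊆ convexHull ℝ T := by
  obtain ⟨T, hTK, hcover, hcard⟩ := exists_isCover_encard_le_of_subset_closedBall hr hK hε
  have hTfin : T.Finite := finite_of_encard_le_coe hcard
  refine ⟨T, hTK, hcard, exists_closedBall_subset_of_forall_lt
    (hTfin.isCompact_convexHull ℝ) hρ fun ρ' hρ' => ?_⟩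
  obtain ⟨y, hy⟩ := hball (ρ' + ε) (by gcongr)
  have hyT := closedBall_subset_closure_convexHull_of_isCover hcover hy
  rw [(hTfin.isClosed_convexHull ℝ).closure_eq] at hyT
  exact ⟨y, hyT⟩

end Normed

theorem exists_range_fin_eq_of_encard_le {α : Type*} {T : Set α} (hT : T.Nonempty) {N : ℕ}
    (hN : T.encard ≤ N) : ∃ y : Fin N → α, range y = T := by
  lift T to Finset α using finite_of_encard_le_coe hN
  rw [encard_coe_eq_coe_finsetCard, Nat.cast_le] at hN
  obtain ⟨t, ht⟩ := hT
  obtain ⟨f, hf⟩ : ∃ f : Fin N → T, f.Surjective := Function.exists_surjective_iff.2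
    ⟨⟨fun _ => ⟨t, ht⟩⟩, Function.Embedding.nonempty_of_card_le (by simpa using hN)⟩
  exact ⟨(↑) ∘ f, by simp [hf.range_comp]⟩

theorem exists_closedBall_subset_of_lt_thickness {d : ℕ} {E : Set (EuclideanSpace ℝ (Fin d))}
    {c : ℝ} (hc : c < thickness E) {x : EuclideanSpace ℝ (Fin d)} (hx : x ∈ E)
    {r : ℝ} (hr : 0 < r) (hrE : r ≤ diam E) :
    ∃ y, closedBall y (c * r) ⊆ convexHull ℝ (closedBall x r ∩ E) := by
  have hzero : ∀ x ∈ E, ∀ r : ℝ, 0 < r → r ≤ diam E →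
      ∃ y, closedBall y (0 * r) ⊆ convexHull ℝ (closedBall x r ∩ E) := by
    intro x hx r hr _
    use x
    rw [zero_mul, closedBall_zero, singleton_subset_iff]
    exact subset_convexHull ℝ _ ⟨mem_closedBall_self hr.le, hx⟩
  rw [thickness] at hc
  obtain ⟨c', ⟨-, hc'⟩, hcc'⟩ :=
    exists_lt_of_lt_csSup (by exact ⟨0, left_mem_Icc.2 zero_le_one, hzero⟩) hc
  obtain ⟨y, hy⟩ := hc' x hx r hr hrE
  exact ⟨y, (closedBall_subset_closedBall (by gcongr)).trans hy⟩

theorem thick_set_finite_points_property_general {V : Type*} [NormedAddCommGroup V]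
    [NormedSpace ℝ V] [FiniteDimensional ℝ V] {E : Set V} {c r : ℝ} (hc : 0 < c) (hr : 0 < r)
    {x : V} (hball : ∀ c' < c, ∃ y, closedBall y (c' * r) ⊆ convexHull ℝ (closedBall x r ∩ E))
    {N : ℕ} (hN : N = ⌊((4 + c) / c) ^ finrank ℝ V⌋₊) :
    ∃ (z : V) (y : Fin N → V), (∀ i, y i ∈ E ∩ closedBall x r) ∧
      closedBall z (c * r / 2) ⊆ convexHull ℝ (range y) := by
  have hρ : 0 < c * r / 2 := by positivity
  obtain ⟨T, hTK, hcard, z, hz⟩ := exists_subset_encard_le_closedBall_subset_convexHull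
    (ε := ⟨c * r / 2, hρ.le⟩) hr.le inter_subset_left hρ hρ fun ρ' hρ' => by
      obtain ⟨y, hy⟩ := hball (ρ' / r) ((div_lt_iff₀ hr).2 (hρ'.trans_eq (add_halves _)))
      exact ⟨y, by rwa [div_mul_cancel₀ _ hr.ne'] at hy⟩
  have hratio : (2 * r + c * r / 2) / (c * r / 2) = (4 + c) / c := by
    field_simp
    ring
  have hTne : T.Nonempty := convexHull_nonempty_iff.1 ((nonempty_closedBall.2 hρ.le).mono hz)
  obtain ⟨y, rfl⟩ := exists_range_fin_eq_of_encard_le (N := N) hTne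
    (by rwa [hN, ← hratio])
  exact ⟨z, y, fun i => (hTK (mem_range_self i)).symm, hz⟩

/-- If `E ⊆ ℝ^d` is compact with `τ(E) ≥ c > 0` and `N = ⌊((4+c)/c)^d⌋`, then for every
`x ∈ E` and `0 < r ≤ diam E` there are `z ∈ ℝ^d` and `y_1, …, y_N ∈ E ∩ B(x,r)` with
`conv({y_1, …, y_N}) ⊇ B(z, cr/2)`. -/
theorem thick_set_finite_points_property {d : ℕ} (E : Set (EuclideanSpace ℝ (Fin d)))
    (hcomp : IsCompact E) (c : ℝ) (hc : 0 < c) (hthick : c ≤ thickness E)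
    (N : ℕ) (hN : N = ⌊((4 + c) / c) ^ d⌋₊) :
    ∀ x ∈ E, ∀ r : ℝ, 0 < r → r ≤ Metric.diam E →
      ∃ (z : EuclideanSpace ℝ (Fin d)) (y : Fin N → EuclideanSpace ℝ (Fin d)),
        (∀ i, y i ∈ E ∩ Metric.closedBall x r) ∧
        Metric.closedBall z (c * r / 2) ⊆ convexHull ℝ (Set.range y) := by
  intro x hx r hr hrE
  exact thick_set_finite_points_property_general hc hr
    (fun c' hc' => exists_closedBall_subset_of_lt_thickness (hc'.trans_le hthick) hx hr hrE)
    (by rwa [finrank_euclideanSpace_fin])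
end

section
/- Let Φ = {φ_i(x) = Tx + a_i}_{i=1}^ℓ be a homogeneous affine iterated function system on ℝ^d, where T is an invertible d×d real matrix with operator norm strictly less than 1, and let E be the attractor of Φ. Suppose the origin is an interior point of conv(A), where A = {a_1, …, a_ℓ}. Then there exist δ > 0 and n ∈ ℕ such that, with B = B(0, δ) and Φ(B) = ∪_{i=1}^ℓ φ_i(B), the n-fold Minkowski sum ⊕_n Φ(B) contains ⊕_n B, and furthermore ⊕_n E ⊇ ⊕_n B. -/
open Metric Set

/-- The `n`-fold arithmetic sum `⊕_n E = {x_1 + ⋯ + x_n : x_i ∈ E}`. -/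
def nfoldSum {d : ℕ} (n : ℕ) (E : Set (EuclideanSpace ℝ (Fin d))) :
    Set (EuclideanSpace ℝ (Fin d)) :=
  {y | ∃ x : Fin n → EuclideanSpace ℝ (Fin d), (∀ i, x i ∈ E) ∧ y = ∑ i, x i}

/-!
Write `nX` for the `n`-fold sum of `X`, let `A` be the set of translations and `L` the linear part,
so that `Φ(X) = L X + A` and `nΦ(X) = L(nX) + nA`. Replacing `A` by a finite subset, choose a ball
`B = B(0, δ) ⊆ conv A`. Rounding the weights of convex combinations to multiples of `1 / n` shows
that the dilate of `conv A` by `n` lies within a distance `C` of `nA`, with `C` independent of `n`.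
Since `L` is onto, `B(0, C) ⊆ L B(0, RC)` for some `R`, and as soon as `RC ≤ nδ` we get
`nB = B(0, nδ) ⊆ L(nB) + nA = nΦ(B)`. Under the contraction `L` this inclusion can be iterated,
while `L(nE) + nA ⊆ nE`; hence every point of `nB` is a limit of points of `nE`.
-/

-- For `n : ℕ` and a set `X`, `n • X` is the `n`-fold sum; the dilate is written `(n : ℝ) • X`.
open scoped Pointwise NNReal Finset

section Comparison

variable {X Y : Type*} [PseudoMetricSpace X] [PseudoMetricSpace Y] {c : ℝ≥0}

theorem infDist_image_le_mul_infDist {f : X → Y} (hf : LipschitzWith c f) {K : Set X} {K' : Set Y}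
    (hne : K.Nonempty) (hmaps : MapsTo f K K') (x : X) :
    infDist (f x) K' ≤ c * infDist x K := by
  have : Nonempty K := hne.to_subtype
  rw [infDist_eq_iInf (x := x), Real.mul_iInf_of_nonneg c.coe_nonneg]
  exact le_ciInf fun z => (infDist_le_dist_of_mem (hmaps z.2)).trans (hf.dist_le_mul x z)

theorem subset_of_subset_iUnion_image_of_mapsTo {ι : Type*} {f : ι → X → X} (hc : c < 1)
    (hf : ∀ i, LipschitzWith c (f i)) {P K : Set X} (hP : Bornology.IsBounded P)
    (hcover : P ⊆ ⋃ i, f i '' P) (hK : IsClosed K) (hne : K.Nonempty)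
    (hmaps : ∀ i, MapsTo (f i) K K) : P ⊆ K := by
  have ⟨z, hz⟩ := hne
  obtain ⟨R, hR⟩ := hP.subset_closedBall z
  have infDist_le (k : ℕ) : ∀ y ∈ P, infDist y K ≤ c ^ k * R := by
    induction k with
    | zero => exact fun y hy => by simpa using (infDist_le_dist_of_mem hz).trans (hR hy)
    | succ k ih =>
      intro y hy
      obtain ⟨i, b, hb, rfl⟩ := mem_iUnion.1 (hcover hy)
      calc infDist (f i b) K
        _ ≤ c * infDist b K := infDist_image_le_mul_infDist (hf i) hne (hmaps i) b
        _ ≤ c * (c ^ k * R) := by gcongr; exact ih b hb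
        _ = c ^ (k + 1) * R := by ring
  have tendsto_zero : Filter.Tendsto (fun k : ℕ => (c : ℝ) ^ k * R) Filter.atTop (nhds 0) := by
    simpa using (tendsto_pow_atTop_nhds_zero_of_lt_one c.coe_nonneg hc).mul_const R
  intro y hy
  rw [hK.mem_iff_infDist_zero hne]
  exact (ge_of_tendsto' tendsto_zero fun k => infDist_le k y hy).antisymm infDist_nonneg

theorem subset_of_subset_image_add_of_image_add_subset {V : Type*} [SeminormedAddCommGroup V]
    {f : V → V} (hc : c < 1) (hf : LipschitzWith c f) {P K S : Set V}
    (hP : Bornology.IsBounded P) (hcover : P ⊆ f '' P + S) (hK : IsClosed K) (hne : K.Nonempty)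
    (hinvariant : f '' K + S ⊆ K) : P ⊆ K := by
  have lipschitz (s : S) : LipschitzWith c fun x => f x + s := by
    simpa only [add_zero] using hf.add (LipschitzWith.const (s : V))
  refine subset_of_subset_iUnion_image_of_mapsTo hc lipschitz hP (fun y hy => ?_) hK hne
    fun s x hx => hinvariant (add_mem_add (mem_image_of_mem f hx) s.2)
  obtain ⟨_, ⟨b, hb, rfl⟩, s, hs, rfl⟩ := hcover hy
  exact mem_iUnion.2 ⟨⟨s, hs⟩, b, hb, rfl⟩

end Comparison

section Sumset

theorem sum_nsmul_mem_sum_nsmul {ι M : Type*} [AddCommMonoid M] {s : Finset ι} {A : Set M}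
    {a : ι → M} (ha : ∀ i ∈ s, a i ∈ A) (k : ι → ℕ) :
    ∑ i ∈ s, k i • a i ∈ (∑ i ∈ s, k i) • A := by
  rw [← Finset.sum_nsmul_assoc]
  exact finsetSum_mem_finsetSum _ _ _ fun i hi => nsmul_mem_nsmul (ha i hi)

theorem isCompact_nsmul {M : Type*} [TopologicalSpace M] [AddMonoid M] [ContinuousAdd M]
    {K : Set M} (hK : IsCompact K) : ∀ n : ℕ, IsCompact (n • K)
  | 0 => by rw [zero_nsmul]; exact isCompact_singleton
  | n + 1 => by rw [succ_nsmul]; exact (isCompact_nsmul hK n).add hK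

theorem nsmul_eq_natCast_smul_of_convex {𝕜 V : Type*} [Field 𝕜] [LinearOrder 𝕜]
    [IsStrictOrderedRing 𝕜] [AddCommGroup V] [Module 𝕜 V] {K : Set V} (hK : Convex 𝕜 K)
    (hne : K.Nonempty) (n : ℕ) : n • K = (n : 𝕜) • K := by
  induction n with
  | zero => rw [zero_nsmul, Nat.cast_zero, zero_smul_set hne]
  | succ n ih =>
    rw [succ_nsmul, ih, Nat.cast_succ, hK.add_smul n.cast_nonneg zero_le_one, one_smul]

theorem nsmul_closedBall_zero {V : Type*} [NormedAddCommGroup V] [NormedSpace ℝ V] {δ : ℝ}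
    (hδ : 0 ≤ δ) (n : ℕ) : n • closedBall (0 : V) δ = closedBall 0 (n * δ) := by
  rw [nsmul_eq_natCast_smul_of_convex (convex_closedBall 0 δ) (nonempty_closedBall.2 hδ),
    _root_.smul_closedBall _ _ hδ, smul_zero, Real.norm_natCast]

end Sumset

section Rounding

theorem exists_nat_sum_eq_forall_abs_sub_le_card {ι : Type*} (s : Finset ι) {t : ι → ℝ}
    (ht : ∀ i ∈ s, 0 ≤ t i) {n : ℕ} (hn : ∑ i ∈ s, t i = n) :
    ∃ k : ι → ℕ, ∑ i ∈ s, k i = n ∧ ∀ i ∈ s, |t i - k i| ≤ #s := by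
  classical
  obtain rfl | ⟨j, hj⟩ := s.eq_empty_or_nonempty
  · exact ⟨0, by simpa [eq_comm] using hn⟩
  set m : ι → ℕ := fun i => ⌊t i⌋₊
  have floor_le : ∀ i ∈ s, (m i : ℝ) ≤ t i := fun i hi => Nat.floor_le (ht i hi)
  have lt_floor_add_one (i : ι) : t i < m i + 1 := Nat.lt_floor_add_one (t i)
  have sum_floor_le : ∑ i ∈ s, m i ≤ n := by
    exact_mod_cast (Finset.sum_le_sum floor_le).trans_eq hn
  obtain ⟨r, hr⟩ := Nat.exists_eq_add_of_le sum_floor_le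
  have deficit_le_card : (r : ℝ) ≤ #s := by
    have n_le : (n : ℝ) ≤ ∑ i ∈ s, (m i : ℝ) + #s := by
      rw [← hn, Finset.card_eq_sum_ones]
      push_cast
      rw [← Finset.sum_add_distrib]
      exact Finset.sum_le_sum fun i _ => (lt_floor_add_one i).le
    rw [hr] at n_le
    push_cast at n_le
    linarith
  have one_le_card : (1 : ℝ) ≤ #s := by exact_mod_cast Finset.card_pos.2 ⟨j, hj⟩
  -- The floors fall short of `n` by `r`, which a single index `j` absorbs.
  refine ⟨fun i => m i + if i = j then r else 0, ?_, fun i hi => ?_⟩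
  · rw [Finset.sum_add_distrib, Finset.sum_ite_eq' s j, if_pos hj, hr]
  · have := floor_le i hi
    have := lt_floor_add_one i
    rw [abs_le]
    dsimp only
    split_ifs <;> push_cast <;> constructor <;> linarith

theorem exists_smul_convexHull_subset_closedBall_add_nsmul {V : Type*} [SeminormedAddCommGroup V]
    [NormedSpace ℝ V] {A : Set V} (hA : A.Finite) :
    ∃ C : ℝ, ∀ n : ℕ, (n : ℝ) • convexHull ℝ A ⊆ closedBall 0 C + n • A := by
  lift A to Finset V using hA
  refine ⟨∑ v ∈ A, #A * ‖v‖, fun n => ?_⟩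
  rintro _ ⟨x, hx, rfl⟩
  obtain ⟨w, w_nonneg, w_sum, rfl⟩ := Finset.mem_convexHull'.1 hx
  obtain ⟨k, rfl, hk⟩ := exists_nat_sum_eq_forall_abs_sub_le_card A (n := n)
    (t := fun v => n * w v) (fun v hv => mul_nonneg n.cast_nonneg (w_nonneg v hv))
    (by rw [← Finset.mul_sum, w_sum, mul_one])
  refine ⟨∑ v ∈ A, ((∑ v ∈ A, k v : ℕ) * w v - k v) • v, ?_, _,
    sum_nsmul_mem_sum_nsmul (fun v hv => hv) k, ?_⟩
  · rw [mem_closedBall_zero_iff]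
    refine norm_sum_le_of_le A fun v hv => ?_
    rw [norm_smul, Real.norm_eq_abs]
    gcongr
    exact hk v hv
  · simp only [sub_smul, mul_smul, Nat.cast_smul_eq_nsmul, Finset.sum_sub_distrib,
      sub_add_cancel, Finset.smul_sum]

end Rounding

theorem exists_closedBall_subset_image_closedBall {𝕜 V W : Type*} [NontriviallyNormedField 𝕜]
    [NormedAddCommGroup V] [NormedSpace 𝕜 V] [CompleteSpace V] [NormedAddCommGroup W]
    [NormedSpace 𝕜 W] [CompleteSpace W] {L : V →L[𝕜] W} (hL : Function.Surjective L) :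
    ∃ R : ℝ, ∀ r, closedBall 0 r ⊆ L '' closedBall 0 (R * r) := by
  obtain ⟨R, hR, preimage⟩ := L.exists_preimage_norm_le hL
  refine ⟨R, fun r y hy => ?_⟩
  obtain ⟨x, rfl, hx⟩ := preimage y
  rw [mem_closedBall_zero_iff] at hy
  exact ⟨x, mem_closedBall_zero_iff.2 (hx.trans (by gcongr)), rfl⟩

section FiniteDimensional

variable {V : Type*} [NormedAddCommGroup V] [NormedSpace ℝ V] [FiniteDimensional ℝ V]

theorem exists_finite_subset_mem_interior_convexHull {A : Set V} {x : V}
    (hx : x ∈ interior (convexHull ℝ A)) :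
    ∃ F ⊆ A, F.Finite ∧ x ∈ interior (convexHull ℝ F) := by
  obtain ⟨b, hxb, hbA⟩ :=
    exists_mem_interior_convexHull_affineBasis (mem_interior_iff_mem_nhds.1 hx)
  have vertex_mem (i) : ∃ t : Finset V, ↑t ⊆ A ∧ b i ∈ convexHull ℝ (t : Set V) := by
    have : b i ∈ convexHull ℝ A := hbA (subset_convexHull ℝ _ (mem_range_self i))
    rw [convexHull_eq_union_convexHull_finite_subsets] at this
    simpa using this
  choose t htA hbt using vertex_mem
  refine ⟨⋃ i, t i, iUnion_subset htA, finite_iUnion fun i => (t i).finite_toSet,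
    interior_mono (convexHull_min ?_ (convex_convexHull ℝ _)) hxb⟩
  rintro _ ⟨i, rfl⟩
  exact convexHull_mono (subset_iUnion (fun i => (t i : Set V)) i) (hbt i)

theorem exists_nsmul_closedBall_subset_image_add_nsmul {L : V →L[ℝ] V}
    (hL : Function.Surjective L) {A : Set V} (h0 : 0 ∈ interior (convexHull ℝ A)) :
    ∃ δ > 0, ∃ n : ℕ, 0 < n ∧ n • closedBall 0 δ ⊆ L '' (n • closedBall 0 δ) + n • A := by
  have : CompleteSpace V := FiniteDimensional.complete ℝ V
  obtain ⟨F, hFA, hF, h0F⟩ := exists_finite_subset_mem_interior_convexHull h0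
  obtain ⟨C, hC⟩ := exists_smul_convexHull_subset_closedBall_add_nsmul hF
  obtain ⟨R, hLR⟩ := exists_closedBall_subset_image_closedBall hL
  obtain ⟨δ, hδ, hδF⟩ := nhds_basis_closedBall.mem_iff.1 (mem_interior_iff_mem_nhds.1 h0F)
  obtain ⟨n, hn⟩ := exists_nat_gt (max 0 (R * C / δ))
  have n_pos : (0 : ℝ) < n := (le_max_left _ _).trans_lt hn
  have RC_le : R * C ≤ n * δ := ((div_lt_iff₀ hδ).1 ((le_max_right _ _).trans_lt hn)).le
  refine ⟨δ, hδ, n, by exact_mod_cast n_pos, ?_⟩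
  calc n • closedBall 0 δ
      = (n : ℝ) • closedBall 0 δ :=
        nsmul_eq_natCast_smul_of_convex (convex_closedBall 0 δ) (nonempty_closedBall.2 hδ.le) n
    _ ⊆ (n : ℝ) • convexHull ℝ F := smul_set_mono hδF
    _ ⊆ closedBall 0 C + n • F := hC n
    _ ⊆ L '' closedBall 0 (R * C) + n • A := add_subset_add (hLR C) (nsmul_subset_nsmul_left hFA)
    _ ⊆ L '' closedBall 0 (n * δ) + n • A := by gcongr
    _ = L '' (n • closedBall 0 δ) + n • A := by rw [nsmul_closedBall_zero hδ.le n]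

theorem homogeneous_selfAffine_sum_contains_general {L : V →L[ℝ] V}
    (hsurj : Function.Surjective L) (hnorm : ‖L‖ < 1) {A E : Set V} (hne : E.Nonempty)
    (hcomp : IsCompact E) (hinvariant : L '' E + A ⊆ E) (h0 : 0 ∈ interior (convexHull ℝ A)) :
    ∃ δ : ℝ, 0 < δ ∧ ∃ n : ℕ, 0 < n ∧
      n • closedBall 0 δ ⊆ n • (L '' closedBall 0 δ + A) ∧ n • closedBall 0 δ ⊆ n • E := by
  obtain ⟨δ, hδ, n, hn, hcover⟩ := exists_nsmul_closedBall_subset_image_add_nsmul hsurj h0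
  have nsmul_image_add (X : Set V) : n • (L '' X + A) = L '' (n • X) + n • A := by
    rw [nsmul_add, image_nsmul]
  have hinvariant' : L '' (n • E) + n • A ⊆ n • E := by
    rw [← nsmul_image_add]
    exact nsmul_subset_nsmul_left hinvariant
  exact ⟨δ, hδ, n, hn, hcover.trans_eq (nsmul_image_add _).symm,
    subset_of_subset_image_add_of_image_add_subset hnorm L.lipschitz
      (isCompact_nsmul (isCompact_closedBall 0 δ) n).isBounded hcover
      (isCompact_nsmul hcomp n).isClosed hne.nsmul hinvariant'⟩

end FiniteDimensional

theorem nfoldSum_eq_nsmul {d : ℕ} (n : ℕ) (E : Set (EuclideanSpace ℝ (Fin d))) :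
    nfoldSum n E = n • E := by
  have nsmul_eq_sum : n • E = ∑ _ : Fin n, E := by simp
  ext y
  simp only [nsmul_eq_sum, mem_fintype_sum, nfoldSum, mem_ofPred_eq, exists_prop, eq_comm]

theorem iUnion_image_add_right_eq_image_add_range {ι α M : Type*} [Add M] (f : α → M) (a : ι → M)
    (B : Set α) : ⋃ i, (fun x => f x + a i) '' B = f '' B + range a := by
  simp only [← iUnion_add_right_image, biUnion_range, image_image]

theorem surjective_toEuclideanCLM_of_isUnit {d : ℕ} {T : Matrix (Fin d) (Fin d) ℝ} (hT : IsUnit T) :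
    Function.Surjective (Matrix.toEuclideanCLM (𝕜 := ℝ) T) :=
  (ContinuousLinearMap.isUnit_iff_bijective.1 (hT.map Matrix.toEuclideanCLM)).2

/-- For a homogeneous affine IFS `Φ = {x ↦ Tx + a_i}` on `ℝ^d` whose attractor is `E`,
if `0` lies in the interior of `conv{a_1, …, a_ℓ}`, then there are `δ > 0` and `n ∈ ℕ`
such that, with `B = B(0, δ)`, one has `⊕_n Φ(B) ⊇ ⊕_n B` and `⊕_n E ⊇ ⊕_n B`. -/
theorem homogeneous_selfAffine_sum_contains {d ℓ : ℕ} (hl : 0 < ℓ)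
    (T : Matrix (Fin d) (Fin d) ℝ) (a : Fin ℓ → EuclideanSpace ℝ (Fin d))
    (hinv : IsUnit T)
    (hnorm : ∃ c : ℝ, 0 ≤ c ∧ c < 1 ∧
      ∀ x : EuclideanSpace ℝ (Fin d), ‖Matrix.toEuclideanLin T x‖ ≤ c * ‖x‖)
    (E : Set (EuclideanSpace ℝ (Fin d))) (hne : E.Nonempty) (hcomp : IsCompact E)
    (hattr : E = ⋃ i, (fun x => Matrix.toEuclideanLin T x + a i) '' E)
    (h0 : (0 : EuclideanSpace ℝ (Fin d)) ∈ interior (convexHull ℝ (Set.range a))) :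
    ∃ δ : ℝ, 0 < δ ∧ ∃ n : ℕ, 0 < n ∧
      nfoldSum n (Metric.closedBall 0 δ) ⊆
        nfoldSum n (⋃ i, (fun x => Matrix.toEuclideanLin T x + a i) ''
          Metric.closedBall 0 δ) ∧
      nfoldSum n (Metric.closedBall 0 δ) ⊆ nfoldSum n E := by
  obtain ⟨c, hc0, hc1, hTc⟩ := hnorm
  simp only [nfoldSum_eq_nsmul, iUnion_image_add_right_eq_image_add_range] at hattr ⊢
  exact homogeneous_selfAffine_sum_contains_general (surjective_toEuclideanCLM_of_isUnit hinv)
    ((ContinuousLinearMap.opNorm_le_bound _ hc0 hTc).trans_lt hc1) hne hcomp hattr.symm.subset h0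
end

section
/- Let Φ = {φ_i(x) = T_i x + a_i}_{i=1}^ℓ be an affine iterated function system on ℝ^d (each T_i invertible with ‖T_i‖ < 1) with attractor E. Suppose there exist an invertible d×d real matrix T and a constant c > 1 such that B(0, c^{-1}) ⊆ T^{-k} T_I(B(0,1)) ⊆ B(0, c) for all k ∈ ℕ and all words I ∈ {1, …, ℓ}^k, where T_I = T_{i_1} ⋯ T_{i_k} for I = i_1…i_k. Suppose in addition the origin is an interior point of conv(A), where A = {a_1, …, a_ℓ}. Then there exist δ > 0 and n ∈ ℕ such that, with B = B(0, δ) and Φ(B) = ∪_{i=1}^ℓ φ_i(B), for all k ∈ ℕ and all I_1, …, I_n ∈ {1, …, ℓ}^k one has T_{I_1}Φ(B) + ⋯ + T_{I_n}Φ(B) ⊇ T_{I_1}B + ⋯ + T_{I_n}B, and furthermore ⊕_n E ⊇ ⊕_n B. -/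
open Metric Set

/-- The arithmetic (Minkowski) sum `E 0 + ⋯ + E (n-1)` of a finite family of subsets of
`ℝ^d`. -/
def sumSets {d n : ℕ} (E : Fin n → Set (EuclideanSpace ℝ (Fin d))) :
    Set (EuclideanSpace ℝ (Fin d)) :=
  {y | ∃ x : Fin n → EuclideanSpace ℝ (Fin d), (∀ i, x i ∈ E i) ∧ y = ∑ i, x i}

/-- The product `T_I = T_{i_1} ⋯ T_{i_k}` of matrices along the word `I = i_1…i_k`. -/
def wordProd {d ℓ : ℕ} (T : Fin ℓ → Matrix (Fin d) (Fin d) ℝ) {k : ℕ}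
    (I : Fin k → Fin ℓ) : Matrix (Fin d) (Fin d) ℝ :=
  (List.ofFn fun j => T (I j)).prod

/-!
Normalise the word maps as `N_I = T^{-k} T_I`: by hypothesis they are uniformly bounded with
uniformly bounded inverses. If `‖y‖ ≤ n c δ`, then `y / n` lies in the convex hull of each set
`N_{I_j} A`, and since the norm comes from an inner product one can pick vertices
`N_{I_j} a_{i_j}` whose sum misses `y` by only `O(√n)`. For large `n` this error, shared equally
among the `n` summands, is at most `ε` per summand and is absorbed by the balls
`N_{I_j} T_{i_j} B ⊇ B(0, ε)`. Iterating the resulting inclusion writes each point of `⊕_n B` as a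
sum of points of `φ_{I_j}(B)` with words of length `k`. The uniform bounds also make all `T_I` with
`|I| = k` comparable to `T_i ^ k` for any single `i`, so the sets `φ_I(B)` shrink and the points of
`⊕_n B` are limits of points of `⊕_n E`.
-/

open Filter Topology
open scoped Pointwise

lemma isCompact_finsetSum {κ X : Type*} [TopologicalSpace X] [AddCommMonoid X] [ContinuousAdd X]
    (s : Finset κ) {A : κ → Set X} (hA : ∀ j ∈ s, IsCompact (A j)) :
    IsCompact (∑ j ∈ s, A j) :=
  Finset.sum_induction A IsCompact (fun _ _ => IsCompact.add) isCompact_singleton hA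

lemma sum_closedBall_zero_subset {κ V : Type*} [Fintype κ] [SeminormedAddCommGroup V] (r : ℝ) :
    ∑ _j : κ, closedBall (0 : V) r ⊆ closedBall 0 (Fintype.card κ * r) := by
  intro y hy
  obtain ⟨x, hx, rfl⟩ := (mem_fintype_sum _ _).1 hy
  rw [mem_closedBall_zero_iff]
  refine (norm_sum_le_of_le _ fun j _ => mem_closedBall_zero_iff.1 (hx j)).trans_eq ?_
  rw [Finset.sum_const, Finset.card_univ, nsmul_eq_mul]

section InnerProductSpace

variable {V κ : Type*} [NormedAddCommGroup V] [InnerProductSpace ℝ V]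

lemma exists_mem_inner_sub_nonpos_of_mem_convexHull {A : Set V} {v : V}
    (hv : v ∈ convexHull ℝ A) (x : V) : ∃ w ∈ A, inner ℝ x (w - v) ≤ 0 := by
  have hconcave := (innerₛₗ ℝ x).concaveOn (convex_convexHull ℝ A)
  obtain ⟨w, hw, hle⟩ := hconcave.exists_le_of_mem_convexHull (subset_convexHull ℝ A) hv
  exact ⟨w, hw, by rw [inner_sub_right]; exact sub_nonpos.2 hle⟩

-- Choosing each new vertex at an obtuse angle to the error so far adds the squared errors.
lemma exists_mem_sum_norm_sub_sq_le_of_mem_convexHull (s : Finset κ) {A : κ → Set V} {v : κ → V}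
    {R : κ → ℝ} (hv : ∀ j ∈ s, v j ∈ convexHull ℝ (A j))
    (hR : ∀ j ∈ s, A j ⊆ closedBall (v j) (R j)) :
    ∃ w ∈ ∑ j ∈ s, A j, ‖w - ∑ j ∈ s, v j‖ ^ 2 ≤ ∑ j ∈ s, R j ^ 2 := by
  classical
  induction s using Finset.induction_on with
  | empty => simp
  | insert j s hj ih =>
    rw [Finset.forall_mem_insert] at hv hR
    obtain ⟨w, hw, hle⟩ := ih hv.2 hR.2
    obtain ⟨w', hw', hinner⟩ :=
      exists_mem_inner_sub_nonpos_of_mem_convexHull hv.1 (w - ∑ i ∈ s, v i)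
    refine ⟨w' + w, by rw [Finset.sum_insert hj]; exact add_mem_add hw' hw, ?_⟩
    have hw'R : ‖w' - v j‖ ^ 2 ≤ R j ^ 2 :=
      pow_le_pow_left₀ (norm_nonneg _) (mem_closedBall_iff_norm.1 (hR.1 hw')) 2
    rw [Finset.sum_insert hj, Finset.sum_insert hj, add_sub_add_comm, add_comm (w' - v j),
      norm_add_sq_real]
    linarith

lemma closedBall_card_mul_subset_sum_closedBall_add [Fintype κ] [Nonempty κ] {A : κ → Set V}
    {r K ε : ℝ} (hr : ∀ j, closedBall 0 r ⊆ convexHull ℝ (A j)) (hK : ∀ j, A j ⊆ closedBall 0 K)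
    (hε : 0 ≤ ε) (hcard : (K + r) ^ 2 ≤ Fintype.card κ * ε ^ 2) :
    closedBall 0 (Fintype.card κ * r) ⊆ ∑ j, (closedBall 0 ε + A j) := by
  intro y hy
  set n : ℝ := (Fintype.card κ : ℝ) with hn_def
  have hn : 0 < n := Nat.cast_pos.2 Fintype.card_pos
  have hsum : ∀ x : V, ∑ _j : κ, n⁻¹ • x = x := fun x => by
    rw [Finset.sum_const, Finset.card_univ, ← Nat.cast_smul_eq_nsmul ℝ, smul_inv_smul₀ hn.ne']
  have hmean : ∀ {x : V} {t : ℝ}, ‖x‖ ≤ n * t → n⁻¹ • x ∈ closedBall 0 t := fun hx => by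
    rw [mem_closedBall_zero_iff, norm_smul, norm_inv, Real.norm_of_nonneg hn.le]
    exact (inv_mul_le_iff₀ hn).2 hx
  have hy_mean : n⁻¹ • y ∈ closedBall 0 r := hmean (mem_closedBall_zero_iff.1 hy)
  obtain ⟨w, hw, hwy⟩ := exists_mem_sum_norm_sub_sq_le_of_mem_convexHull Finset.univ
    (fun j _ => hr j hy_mean) (R := fun _ => K + r) fun j _ x hx =>
      mem_closedBall_iff_norm.2 <| (norm_sub_le _ _).trans <|
        add_le_add (mem_closedBall_zero_iff.1 (hK j hx)) (mem_closedBall_zero_iff.1 hy_mean)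
  rw [hsum, Finset.sum_const, Finset.card_univ, nsmul_eq_mul, ← hn_def] at hwy
  have herror : ‖y - w‖ ≤ n * ε := by
    rw [norm_sub_rev]
    refine le_of_sq_le_sq ?_ (by positivity)
    calc ‖w - y‖ ^ 2 ≤ n * (K + r) ^ 2 := hwy
      _ ≤ n * (n * ε ^ 2) := by gcongr
      _ = (n * ε) ^ 2 := by ring
  rw [Finset.sum_add_distrib, ← sub_add_cancel y w, ← hsum (y - w)]
  exact add_mem_add (finsetSum_mem_finsetSum _ _ _ fun _ _ => hmean herror) hw

end InnerProductSpace

section NormedSpace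

variable {V W : Type*} [NormedAddCommGroup V] [NormedSpace ℝ V] [NormedAddCommGroup W]
  [NormedSpace ℝ W]

lemma opNorm_le_of_image_unitClosedBall_subset {f : V →L[ℝ] W} {c : ℝ}
    (h : f '' closedBall 0 1 ⊆ closedBall 0 c) : ‖f‖ ≤ c := by
  have hmem : ∀ {x}, ‖x‖ ≤ 1 → ‖f x‖ ≤ c := fun hx =>
    mem_closedBall_zero_iff.1 (h (mem_image_of_mem f (mem_closedBall_zero_iff.2 hx)))
  exact f.opNorm_le_of_unit_norm ((norm_nonneg _).trans (hmem (x := 0) (by simp)))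
    fun x hx => hmem hx.le

lemma image_closedBall_zero_subset_of_opNorm_le {f : V →L[ℝ] W} {c : ℝ} (hf : ‖f‖ ≤ c) (r : ℝ) :
    f '' closedBall 0 r ⊆ closedBall 0 (c * r) := by
  rintro _ ⟨x, hx, rfl⟩
  rw [mem_closedBall_zero_iff] at hx ⊢
  exact f.le_of_opNorm_le_of_le hf hx

lemma closedBall_mul_subset_image_closedBall {f : V →L[ℝ] W} {r s : ℝ} (hr : 0 ≤ r) (hs : 0 ≤ s)
    (h : closedBall 0 r ⊆ f '' closedBall 0 1) : closedBall 0 (s * r) ⊆ f '' closedBall 0 s := by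
  calc closedBall 0 (s * r) = s • closedBall 0 r := by
        rw [smul_closedBall _ _ hr, smul_zero, Real.norm_of_nonneg hs]
    _ ⊆ s • f '' closedBall 0 1 := smul_set_mono h
    _ = f '' closedBall 0 s := by
        rw [← image_smul_set, smul_unitClosedBall_of_nonneg hs]

end NormedSpace

section WordMaps

variable {ι V : Type*} [NormedAddCommGroup V] [NormedSpace ℝ V]

/-- The composition `T_I = T_{i_1} ∘ ⋯ ∘ T_{i_k}` of linear maps along the word `I = i_1…i_k`. -/
def wordComp (T : ι → V →L[ℝ] V) {k : ℕ} (I : Fin k → ι) : V →L[ℝ] V :=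
  (List.ofFn fun j => T (I j)).prod

/-- The image `Φ(B) = ⋃ i, φ_i(B)` of a set under the affine iterated function system
`φ_i(x) = T_i x + a_i` (the Hutchinson operator). -/
def hutchinson (T : ι → V →L[ℝ] V) (a : ι → V) (B : Set V) : Set V :=
  ⋃ i, (fun x => T i x + a i) '' B

variable {T : ι → V →L[ℝ] V} {a : ι → V}

lemma mem_hutchinson {B : Set V} {x : V} :
    x ∈ hutchinson T a B ↔ ∃ i, ∃ b ∈ B, T i b + a i = x := by
  simp only [hutchinson, mem_iUnion, mem_image]

lemma wordComp_zero (I : Fin 0 → ι) : wordComp T I = 1 := by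
  simp [wordComp]

lemma wordComp_snoc {k : ℕ} (I : Fin k → ι) (i : ι) :
    wordComp T (Fin.snoc I i : Fin (k + 1) → ι) = wordComp T I * T i := by
  rw [wordComp, List.ofFn_succ_last]
  simp [wordComp]

lemma wordComp_const (k : ℕ) (i : ι) : wordComp T (fun _ : Fin k => i) = T i ^ k := by
  simp [wordComp]

variable {κ : Type*} [Fintype κ] {B E : Set V}

-- The maps `x ↦ T_I x + t` produced here are the compositions `φ_{i_1} ∘ ⋯ ∘ φ_{i_k}`.
lemma exists_words_mem_sum_image (hE : hutchinson T a E ⊆ E)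
    (hrefine : ∀ (k : ℕ) (I : κ → Fin k → ι),
      ∑ j, wordComp T (I j) '' B ⊆ ∑ j, wordComp T (I j) '' hutchinson T a B)
    {y : V} (hy : y ∈ ∑ _j : κ, B) (k : ℕ) :
    ∃ (I : κ → Fin k → ι) (t : κ → V), (∀ j, MapsTo (fun x => wordComp T (I j) x + t j) E E) ∧
      y ∈ ∑ j, (fun x => wordComp T (I j) x + t j) '' B := by
  induction k with
  | zero =>
    refine ⟨fun _ => Fin.elim0, 0, fun j x hx => ?_, ?_⟩
    · simpa [wordComp_zero] using hx
    · simpa [wordComp_zero] using hy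
  | succ k ih =>
    obtain ⟨I, t, hmaps, hyI⟩ := ih
    obtain ⟨z, hz, rfl⟩ := (mem_fintype_sum _ _).1 hyI
    choose b hb hbz using hz
    obtain ⟨w, hw, hsum⟩ := (mem_fintype_sum _ _).1 <| hrefine k I <|
      finsetSum_mem_finsetSum Finset.univ _ (fun j => wordComp T (I j) (b j))
        fun j _ => mem_image_of_mem _ (hb j)
    choose x hx hxw using hw
    choose i b' hb' hbx using fun j => mem_hutchinson.1 (hx j)
    have hsnoc : ∀ j v, wordComp T (Fin.snoc (I j) (i j) : Fin (k + 1) → ι) v +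
        (wordComp T (I j) (a (i j)) + t j) = wordComp T (I j) (T (i j) v + a (i j)) + t j :=
      fun j v => by rw [wordComp_snoc, mul_apply_eq_comp, map_add, add_assoc]
    refine ⟨fun j => Fin.snoc (I j) (i j), fun j => wordComp T (I j) (a (i j)) + t j,
      fun j v hv => ?_, (mem_fintype_sum _ _).2 ⟨fun j => w j + t j, fun j => ?_, ?_⟩⟩
    · simpa only [hsnoc] using hmaps j (hE (mem_hutchinson.2 ⟨i j, v, hv, rfl⟩))
    · exact ⟨b' j, hb' j, by simp only [hsnoc, hbx, hxw]⟩
    · simp only [← hbz, Finset.sum_add_distrib, hsum]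

lemma sum_subset_closure_sum_of_refine (hB : Bornology.IsBounded B) (hne : E.Nonempty)
    (hE : hutchinson T a E ⊆ E) {u : ℕ → ℝ} (hu : Tendsto u atTop (𝓝 0))
    (hTu : ∀ (k : ℕ) (I : Fin k → ι), ‖wordComp T I‖ ≤ u k)
    (hrefine : ∀ (k : ℕ) (I : κ → Fin k → ι),
      ∑ j, wordComp T (I j) '' B ⊆ ∑ j, wordComp T (I j) '' hutchinson T a B) :
    ∑ _j : κ, B ⊆ closure (∑ _j : κ, E) := by
  intro y hy
  obtain ⟨e, he⟩ := hne
  obtain ⟨C, hC⟩ := hB.subset_closedBall e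
  choose I t hmaps hyI using exists_words_mem_sum_image hE hrefine hy
  let p k := ∑ j, (wordComp T (I k j) e + t k j)
  have hp : ∀ k, p k ∈ ∑ _j : κ, E := fun k =>
    finsetSum_mem_finsetSum _ _ _ fun j _ => hmaps k j he
  have hpy : ∀ k, dist (p k) y ≤ Fintype.card κ * (u k * C) := by
    intro k
    obtain ⟨z, hz, rfl⟩ := (mem_fintype_sum _ _).1 (hyI k)
    refine (dist_sum_sum_le_of_le (d := fun _ => u k * C) _ fun j _ => ?_).trans_eq (by simp)
    obtain ⟨b, hb, hbz⟩ := hz j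
    rw [← hbz, dist_add_right, dist_comm, dist_eq_norm, ← map_sub]
    exact (wordComp T (I k j)).le_of_opNorm_le_of_le (hTu k _) (mem_closedBall_iff_norm.1 (hC hb))
  have hlim : Tendsto (fun k => Fintype.card κ * (u k * C)) atTop (𝓝 0) := by
    simpa using (hu.mul_const C).const_mul (Fintype.card κ : ℝ)
  exact mem_closure_of_tendsto (tendsto_iff_dist_tendsto_zero.2 <|
    squeeze_zero (fun _ => dist_nonneg) hpy hlim) (Eventually.of_forall hp)

/-- The rescaled word map `S^{-k} T_I` of a word `I` of length `k`. -/
def rescaledWord (T : ι → V →L[ℝ] V) (S : (V →L[ℝ] V)ˣ) {k : ℕ} (I : Fin k → ι) : V →L[ℝ] V :=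
  ↑(S⁻¹ ^ k) * wordComp T I

/-- The ball condition: the ellipsoids `S^{-k} T_I(B(0, 1))`, for words `I` of any length `k`, lie
between the balls of radii `c⁻¹` and `c`. The invertible map `S` is the `T` of the paper. -/
structure BallCondition (T : ι → V →L[ℝ] V) (S : (V →L[ℝ] V)ˣ) (c : ℝ) : Prop where
  pos : 0 < c
  unitClosedBall_subset {k : ℕ} (I : Fin k → ι) :
    closedBall 0 c⁻¹ ⊆ rescaledWord T S I '' closedBall 0 1
  image_subset {k : ℕ} (I : Fin k → ι) : rescaledWord T S I '' closedBall 0 1 ⊆ closedBall 0 c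

variable {S : (V →L[ℝ] V)ˣ} {c : ℝ}

lemma pow_mul_rescaledWord {k : ℕ} (I : Fin k → ι) :
    ↑(S ^ k) * rescaledWord T S I = wordComp T I := by
  rw [rescaledWord, inv_pow, Units.mul_inv_cancel_left]

lemma mul_rescaledWord_snoc {k : ℕ} (I : Fin k → ι) (i : ι) :
    ↑S * rescaledWord T S (Fin.snoc I i : Fin (k + 1) → ι) = rescaledWord T S I * T i := by
  simp only [rescaledWord, wordComp_snoc, pow_succ', Units.val_mul, mul_assoc,
    Units.mul_inv_cancel_left]

lemma sum_image_wordComp {k : ℕ} (I : κ → Fin k → ι) (A : Set V) :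
    ∑ j, wordComp T (I j) '' A =
      (↑(S ^ k) : V →L[ℝ] V) '' ∑ j, rescaledWord T S (I j) '' A := by
  simp only [image_finsetSum, image_image, ← mul_apply_eq_comp, pow_mul_rescaledWord]

namespace BallCondition

variable {k : ℕ}

lemma opNorm_rescaledWord_le (h : BallCondition T S c) (I : Fin k → ι) :
    ‖rescaledWord T S I‖ ≤ c :=
  opNorm_le_of_image_unitClosedBall_subset (h.image_subset I)

lemma closedBall_subset_image_rescaledWord (h : BallCondition T S c) (I : Fin k → ι) {r : ℝ}
    (hr : 0 ≤ r) : closedBall 0 (r / c) ⊆ rescaledWord T S I '' closedBall 0 r :=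
  closedBall_mul_subset_image_closedBall (inv_nonneg.2 h.pos.le) hr (h.unitClosedBall_subset I)

lemma opNorm_pow_le (h : BallCondition T S c) (I : Fin k → ι) :
    ‖(↑(S ^ k) : V →L[ℝ] V)‖ ≤ c * ‖wordComp T I‖ := by
  refine ContinuousLinearMap.opNorm_le_of_unit_norm (by have := h.pos; positivity) fun x hx => ?_
  obtain ⟨v, hv, rfl⟩ := h.closedBall_subset_image_rescaledWord I h.pos.le
    (mem_closedBall_zero_iff.2 (by rw [hx, div_self h.pos.ne']) : x ∈ closedBall 0 (c / c))
  rw [← mul_apply_eq_comp, pow_mul_rescaledWord, mul_comm]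
  exact (wordComp T I).le_opNorm_of_le (mem_closedBall_zero_iff.1 hv)

lemma opNorm_wordComp_le (h : BallCondition T S c) (I J : Fin k → ι) :
    ‖wordComp T I‖ ≤ c * ‖wordComp T J‖ * c := by
  rw [← pow_mul_rescaledWord (S := S) I]
  exact (norm_mul_le _ _).trans <| mul_le_mul (h.opNorm_pow_le J) (h.opNorm_rescaledWord_le I)
    (norm_nonneg _) (by have := h.pos; positivity)

lemma closedBall_subset_image_rescaledWord_mul (h : BallCondition T S c) {δ ε : ℝ} (hδ : 0 ≤ δ)
    (hε : ‖(↑S⁻¹ : V →L[ℝ] V)‖ * ε ≤ δ / c) (I : Fin k → ι) (i : ι) :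
    closedBall 0 ε ⊆ (rescaledWord T S I * T i) '' closedBall 0 δ := by
  intro z hz
  have hSz : (↑S⁻¹ : V →L[ℝ] V) z ∈ closedBall 0 (δ / c) :=
    closedBall_subset_closedBall hε
      (image_closedBall_zero_subset_of_opNorm_le le_rfl ε (mem_image_of_mem _ hz))
  obtain ⟨b, hb, hbz⟩ := h.closedBall_subset_image_rescaledWord (Fin.snoc I i) hδ hSz
  refine ⟨b, hb, ?_⟩
  rw [← mul_rescaledWord_snoc, mul_apply_eq_comp, hbz,
    ← mul_apply_eq_comp, Units.mul_inv, one_apply_eq_self]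

lemma closedBall_add_image_range_subset (h : BallCondition T S c) {δ ε : ℝ} (hδ : 0 ≤ δ)
    (hε : ‖(↑S⁻¹ : V →L[ℝ] V)‖ * ε ≤ δ / c) (I : Fin k → ι) :
    closedBall 0 ε + rescaledWord T S I '' range a ⊆
      rescaledWord T S I '' hutchinson T a (closedBall 0 δ) := by
  rintro _ ⟨z, hz, _, ⟨_, ⟨i, rfl⟩, rfl⟩, rfl⟩
  obtain ⟨b, hb, rfl⟩ := h.closedBall_subset_image_rescaledWord_mul hδ hε I i hz
  exact ⟨T i b + a i, mem_hutchinson.2 ⟨i, b, hb, rfl⟩, map_add _ _ _⟩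

end BallCondition

end WordMaps

section Refinement

variable {ι V : Type*} [NormedAddCommGroup V] [InnerProductSpace ℝ V] {T : ι → V →L[ℝ] V}
  {a : ι → V} {S : (V →L[ℝ] V)ˣ} {c : ℝ}

namespace BallCondition

lemma sum_image_closedBall_subset (h : BallCondition T S c) {κ : Type*} [Fintype κ] [Nonempty κ]
    {δ ε R : ℝ} (hδ : 0 ≤ δ) (hε : 0 ≤ ε) (hSε : ‖(↑S⁻¹ : V →L[ℝ] V)‖ * ε ≤ δ / c)
    (hR : range a ⊆ closedBall 0 R)
    (hhull : closedBall 0 (c * δ * c) ⊆ convexHull ℝ (range a))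
    (hcard : (c * R + c * δ) ^ 2 ≤ Fintype.card κ * ε ^ 2) {k : ℕ} (I : κ → Fin k → ι) :
    ∑ j, wordComp T (I j) '' closedBall 0 δ ⊆
      ∑ j, wordComp T (I j) '' hutchinson T a (closedBall 0 δ) := by
  have hc := h.pos
  have hhull_image : ∀ j, closedBall 0 (c * δ) ⊆
      convexHull ℝ (rescaledWord T S (I j) '' range a) := fun j =>
    calc closedBall 0 (c * δ) = closedBall 0 (c * δ * c / c) := by
          rw [mul_div_cancel_right₀ _ hc.ne']
      _ ⊆ rescaledWord T S (I j) '' closedBall 0 (c * δ * c) :=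
        h.closedBall_subset_image_rescaledWord (I j) (by positivity)
      _ ⊆ rescaledWord T S (I j) '' convexHull ℝ (range a) := image_mono hhull
      _ = convexHull ℝ (rescaledWord T S (I j) '' range a) :=
        (rescaledWord T S (I j)).toLinearMap.image_convexHull _
  have hbound := fun j (r : ℝ) =>
    image_closedBall_zero_subset_of_opNorm_le (h.opNorm_rescaledWord_le (I j)) r
  rw [sum_image_wordComp (S := S), sum_image_wordComp (S := S)]
  apply image_mono
  calc ∑ j, rescaledWord T S (I j) '' closedBall 0 δ
      ⊆ ∑ _j : κ, closedBall 0 (c * δ) :=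
        finsetSum_subset_finsetSum _ _ _ fun j _ => hbound j δ
    _ ⊆ closedBall 0 (Fintype.card κ * (c * δ)) := sum_closedBall_zero_subset _
    _ ⊆ ∑ j, (closedBall 0 ε + rescaledWord T S (I j) '' range a) :=
        closedBall_card_mul_subset_sum_closedBall_add hhull_image
          (fun j => (image_mono hR).trans (hbound j R)) hε hcard
    _ ⊆ ∑ j, rescaledWord T S (I j) '' hutchinson T a (closedBall 0 δ) :=
        finsetSum_subset_finsetSum _ _ _ fun j _ =>
          h.closedBall_add_image_range_subset hδ hSε (I j)

lemma exists_sum_image_closedBall_subset (h : BallCondition T S c)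
    (ha : Bornology.IsBounded (range a)) (h0 : 0 ∈ interior (convexHull ℝ (range a))) :
    ∃ δ : ℝ, 0 < δ ∧ ∃ n : ℕ, 0 < n ∧ ∀ (k : ℕ) (I : Fin n → Fin k → ι),
      ∑ j, wordComp T (I j) '' closedBall 0 δ ⊆
        ∑ j, wordComp T (I j) '' hutchinson T a (closedBall 0 δ) := by
  have hc := h.pos
  obtain ⟨ρ, hρ, hρa⟩ := nhds_basis_closedBall.mem_iff.1 (mem_interior_iff_mem_nhds.1 h0)
  obtain ⟨R, hR⟩ := ha.subset_closedBall 0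
  obtain ⟨δ, hδ, hδρ⟩ : ∃ δ, 0 < δ ∧ c * δ * c = ρ := ⟨ρ / c ^ 2, by positivity, by field_simp⟩
  obtain ⟨ε, hε, hSε⟩ := exists_pos_mul_lt (div_pos hδ hc) ‖(↑S⁻¹ : V →L[ℝ] V)‖
  obtain ⟨n, hn⟩ := exists_nat_gt ((c * R + c * δ) ^ 2 / ε ^ 2)
  have hn_pos : 0 < n := Nat.cast_pos.1 ((by positivity : (0 : ℝ) ≤ _).trans_lt hn)
  have : Nonempty (Fin n) := ⟨⟨0, hn_pos⟩⟩
  refine ⟨δ, hδ, n, hn_pos, fun k I =>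
    h.sum_image_closedBall_subset hδ.le hε.le hSε.le hR (hδρ ▸ hρa) ?_ I⟩
  rw [Fintype.card_fin, ← div_le_iff₀ (by positivity)]
  exact hn.le

end BallCondition

theorem selfAffine_sum_contains_of_ball_condition_general (hball : BallCondition T S c)
    (ha : Bornology.IsBounded (range a)) (h0 : 0 ∈ interior (convexHull ℝ (range a)))
    {i₀ : ι} (hi₀ : ‖T i₀‖ < 1) {E : Set V} (hne : E.Nonempty) (hE : hutchinson T a E ⊆ E) :
    ∃ δ : ℝ, 0 < δ ∧ ∃ n : ℕ, 0 < n ∧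
      (∀ (k : ℕ) (I : Fin n → Fin k → ι),
        ∑ j, wordComp T (I j) '' closedBall 0 δ ⊆
          ∑ j, wordComp T (I j) '' hutchinson T a (closedBall 0 δ)) ∧
      ∑ _j : Fin n, closedBall (0 : V) δ ⊆ closure (∑ _j : Fin n, E) := by
  obtain ⟨δ, hδ, n, hn, hrefine⟩ := hball.exists_sum_image_closedBall_subset ha h0
  refine ⟨δ, hδ, n, hn, hrefine, ?_⟩
  have hdecay : Tendsto (fun k => c * ‖T i₀ ^ k‖ * c) atTop (𝓝 0) := by
    simpa using ((tendsto_pow_atTop_nhds_zero_of_norm_lt_one hi₀).norm.const_mul c).mul_const c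
  exact sum_subset_closure_sum_of_refine isBounded_closedBall hne hE hdecay
    (fun k I => wordComp_const (T := T) k i₀ ▸ hball.opNorm_wordComp_le I fun _ => i₀) hrefine

end Refinement

section Matrix

variable {d : ℕ}

lemma sumSets_eq_sum {n : ℕ} (E : Fin n → Set (EuclideanSpace ℝ (Fin d))) :
    sumSets E = ∑ j, E j := by
  ext y
  simp [sumSets, mem_fintype_sum, eq_comm]

lemma toEuclideanCLM_wordProd {ℓ k : ℕ} (T : Fin ℓ → Matrix (Fin d) (Fin d) ℝ)
    (I : Fin k → Fin ℓ) :
    Matrix.toEuclideanCLM (𝕜 := ℝ) (wordProd T I) =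
      wordComp (fun i => Matrix.toEuclideanCLM (𝕜 := ℝ) (T i)) I := by
  rw [wordProd, wordComp, map_list_prod, List.map_ofFn]
  rfl

lemma rescaledWord_toEuclideanCLM {ℓ k : ℕ} (T : Fin ℓ → Matrix (Fin d) (Fin d) ℝ)
    (S : (Matrix (Fin d) (Fin d) ℝ)ˣ) (I : Fin k → Fin ℓ) :
    rescaledWord (fun i => Matrix.toEuclideanCLM (𝕜 := ℝ) (T i))
      (Units.map (Matrix.toEuclideanCLM (n := Fin d) (𝕜 := ℝ)) S) I =
    Matrix.toEuclideanCLM (𝕜 := ℝ) ((S : Matrix (Fin d) (Fin d) ℝ)⁻¹ ^ k * wordProd T I) := by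
  rw [rescaledWord, ← toEuclideanCLM_wordProd, map_mul, ← Matrix.coe_units_inv, ← map_inv,
    ← map_pow, Units.coe_map, Units.val_pow_eq_pow_val]
  rfl

lemma ballCondition_toEuclideanCLM {ℓ : ℕ} {T : Fin ℓ → Matrix (Fin d) (Fin d) ℝ}
    {S : (Matrix (Fin d) (Fin d) ℝ)ˣ} {c : ℝ} (hc : 0 < c)
    (h : ∀ (k : ℕ) (I : Fin k → Fin ℓ),
      closedBall (0 : EuclideanSpace ℝ (Fin d)) c⁻¹ ⊆
        Matrix.toEuclideanLin ((S : Matrix (Fin d) (Fin d) ℝ)⁻¹ ^ k * wordProd T I) ''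
          closedBall 0 1 ∧
      Matrix.toEuclideanLin ((S : Matrix (Fin d) (Fin d) ℝ)⁻¹ ^ k * wordProd T I) ''
          closedBall 0 1 ⊆ closedBall 0 c) :
    BallCondition (fun i => Matrix.toEuclideanCLM (𝕜 := ℝ) (T i))
      (Units.map (Matrix.toEuclideanCLM (n := Fin d) (𝕜 := ℝ)) S) c where
  pos := hc
  unitClosedBall_subset I := rescaledWord_toEuclideanCLM T S I ▸ (h _ I).1
  image_subset I := rescaledWord_toEuclideanCLM T S I ▸ (h _ I).2

end Matrix

/-- Proposition on affine IFSs: assume `B(0, c⁻¹) ⊆ T^{-k} T_I(B(0,1)) ⊆ B(0, c)` for all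
words `I` of every length `k`, and that `0` is interior to `conv{a_1,…,a_ℓ}`. Then there
are `δ > 0` and `n` with `T_{I_1}Φ(B) + ⋯ + T_{I_n}Φ(B) ⊇ T_{I_1}B + ⋯ + T_{I_n}B` for all
equal-length words `I_1, …, I_n`, where `B = B(0,δ)`, and moreover `⊕_n E ⊇ ⊕_n B`. -/
theorem selfAffine_sum_contains_of_ball_condition {d ℓ : ℕ} (hl : 0 < ℓ)
    (T : Fin ℓ → Matrix (Fin d) (Fin d) ℝ) (a : Fin ℓ → EuclideanSpace ℝ (Fin d))
    (hinv : ∀ i, IsUnit (T i))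
    (hnorm : ∀ i, ∃ c : ℝ, 0 ≤ c ∧ c < 1 ∧
      ∀ x : EuclideanSpace ℝ (Fin d), ‖Matrix.toEuclideanLin (T i) x‖ ≤ c * ‖x‖)
    (E : Set (EuclideanSpace ℝ (Fin d))) (hne : E.Nonempty) (hcomp : IsCompact E)
    (hattr : E = ⋃ i, (fun x => Matrix.toEuclideanLin (T i) x + a i) '' E)
    (hball : ∃ (S : Matrix (Fin d) (Fin d) ℝ) (c : ℝ), IsUnit S ∧ 1 < c ∧
      ∀ (k : ℕ) (I : Fin k → Fin ℓ),
        Metric.closedBall (0 : EuclideanSpace ℝ (Fin d)) c⁻¹ ⊆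
          Matrix.toEuclideanLin (S⁻¹ ^ k * wordProd T I) '' Metric.closedBall 0 1 ∧
        Matrix.toEuclideanLin (S⁻¹ ^ k * wordProd T I) '' Metric.closedBall 0 1 ⊆
          Metric.closedBall 0 c)
    (h0 : (0 : EuclideanSpace ℝ (Fin d)) ∈ interior (convexHull ℝ (Set.range a))) :
    ∃ δ : ℝ, 0 < δ ∧ ∃ n : ℕ, 0 < n ∧
      (∀ (k : ℕ) (I : Fin n → (Fin k → Fin ℓ)),
        sumSets (fun j => Matrix.toEuclideanLin (wordProd T (I j)) ''
            Metric.closedBall 0 δ) ⊆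
          sumSets (fun j => Matrix.toEuclideanLin (wordProd T (I j)) ''
            (⋃ i, (fun x => Matrix.toEuclideanLin (T i) x + a i) ''
              Metric.closedBall 0 δ))) ∧
      sumSets (fun _ : Fin n => Metric.closedBall (0 : EuclideanSpace ℝ (Fin d)) δ) ⊆
        sumSets (fun _ : Fin n => E) := by
  obtain ⟨_, c, ⟨S, rfl⟩, hc, hSc⟩ := hball
  obtain ⟨q, hq0, hq1, hq⟩ := hnorm ⟨0, hl⟩
  obtain ⟨δ, hδ, n, hn, hrefine, hcover⟩ := selfAffine_sum_contains_of_ball_condition_general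
    (ballCondition_toEuclideanCLM (one_pos.trans hc) hSc) (finite_range a).isBounded h0
    ((ContinuousLinearMap.opNorm_le_bound _ hq0 hq).trans_lt hq1) hne hattr.ge
  simp only [← toEuclideanCLM_wordProd] at hrefine
  rw [(isCompact_finsetSum _ fun _ _ => hcomp).isClosed.closure_eq] at hcover
  simp only [sumSets_eq_sum]
  exact ⟨δ, hδ, n, hn, hrefine, hcover⟩
end

section
/- Let T = [[c, e], [0, d]] be a 2×2 upper triangular real matrix with d > c > 0 and e ∈ ℝ. Let ε > 0 satisfy ε|e| < d − c, and define the cone K = {(x, y) ∈ ℝ² : y ≥ ε|x|}. Then T maps K ∖ {0} into the interior of K. -/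
open Set

section OrderedRing

variable {R : Type*} [CommRing R] [LinearOrder R] [IsStrictOrderedRing R]

theorem pos_of_mul_abs_le_of_ne_zero {ε : R} (hε : 0 < ε) {v : Fin 2 → R}
    (hv : ε * |v 0| ≤ v 1) (hv0 : v ≠ 0) : 0 < v 1 := by
  have hy : 0 ≤ v 1 := (mul_nonneg hε.le (abs_nonneg _)).trans hv
  refine hy.lt_of_ne' fun hy0 => hv0 ?_
  have hx0 : v 0 = 0 := abs_nonpos_iff.mp (nonpos_of_mul_nonpos_right (hv.trans_eq hy0) hε)
  exact funext (Fin.forall_fin_two.mpr ⟨hx0, hy0⟩)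

theorem mul_abs_mul_add_mul_lt {c d e ε x y : R} (hε : 0 ≤ ε) (h : |c| + ε * |e| < d)
    (hy : 0 < y) (hxy : ε * |x| ≤ y) : ε * |c * x + e * y| < d * y :=
  calc
    ε * |c * x + e * y| ≤ ε * (|c * x| + |e * y|) := by gcongr; exact abs_add_le _ _
    _ = |c| * (ε * |x|) + ε * |e| * y := by rw [abs_mul, abs_mul, abs_of_pos hy]; ring
    _ ≤ |c| * y + ε * |e| * y := by gcongr
    _ = (|c| + ε * |e|) * y := by ring
    _ < d * y := by gcongr

-- Over `ℝ`, `h` says exactly that the boundary rays through `(±1, ε)` are sent into the interior.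
theorem triangular_matrix_maps_cone_into_interior_general
    [TopologicalSpace R] [OrderTopology R] [ContinuousMul R] {c d e ε : R} (hε : 0 < ε)
    (h : |c| + ε * |e| < d) {v : Fin 2 → R} (hv : ε * |v 0| ≤ v 1) (hv0 : v ≠ 0) :
    (!![c, e; 0, d]).mulVec v ∈ interior {w : Fin 2 → R | ε * |w 0| ≤ w 1} := by
  have hlt : ε * |c * v 0 + e * v 1| < d * v 1 :=
    mul_abs_mul_add_mul_lt hε.le h (pos_of_mul_abs_le_of_ne_zero hε hv hv0) hv
  refine lt_subset_interior_le (by fun_prop) (by fun_prop) ?_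
  simpa [Matrix.mulVec, dotProduct, Fin.sum_univ_two] using hlt

end OrderedRing

/-- Let `T = [[c, e], [0, d]]` with `d > c > 0`, and let `ε > 0` satisfy `ε|e| < d − c`.
Then `T` maps the cone `K = {(x, y) : y ≥ ε|x|}` minus the origin into the interior of
`K`. -/
theorem triangular_matrix_maps_cone_into_interior (c d e ε : ℝ)
    (hc : 0 < c) (hcd : c < d) (hε : 0 < ε) (h : ε * |e| < d - c) :
    ∀ v : Fin 2 → ℝ, ε * |v 0| ≤ v 1 → v ≠ 0 →
      (!![c, e; 0, d]).mulVec v ∈ interior {w : Fin 2 → ℝ | ε * |w 0| ≤ w 1} :=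
  fun _ hv hv0 => triangular_matrix_maps_cone_into_interior_general hε
    (by rwa [abs_of_pos hc, ← lt_sub_iff_add_lt']) hv hv0
end

section
/- For i = 1, …, ℓ let T_i = [[c, e_i], [0, d]] be 2×2 upper triangular real matrices with common diagonal entries c > d > 0 and arbitrary e_i ∈ ℝ, and let T = diag(c, d). Then there exists a constant λ > 1 such that for every n ≥ 0 and every word I = i_1…i_n ∈ {1, …, ℓ}^n, one has B(0, λ^{-1}) ⊆ T^{-n} T_I (B(0,1)) ⊆ B(0, λ), where T_I = T_{i_1} ⋯ T_{i_n} (the identity matrix when n = 0). -/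
open Metric Set

/-!
Write `T = diagonal D`. Then `T + single i j a = T * transvection i j (a / D i)`, and moving `T` to
the left of a transvection rescales its parameter by `D j / D i`. Hence a product of `n` such
matrices is `T ^ n` times a single transvection, whose parameter is dominated by a geometric series
of ratio `‖D j / D i‖ < 1`, so is bounded independently of `n`. A transvection of parameter `x` has
inverse of parameter `-x`, and both have operator norm at most `1 + ‖x‖`.
-/

section DiagonalTransvection

open Matrix

lemma diagonal_mul_single {R m : Type*} [NonUnitalNonAssocSemiring R] [Fintype m] [DecidableEq m]
    (D : m → R) (i j : m) (x : R) : diagonal D * single i j x = single i j (D i * x) := by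
  ext k l
  by_cases hik : i = k <;> simp [diagonal_mul, single_apply, hik]

lemma single_mul_diagonal {R m : Type*} [NonUnitalNonAssocSemiring R] [Fintype m] [DecidableEq m]
    (D : m → R) (i j : m) (x : R) : single i j x * diagonal D = single i j (x * D j) := by
  ext k l
  by_cases hjl : j = l <;> simp [mul_diagonal, single_apply, hjl]

lemma diagonal_fin_two {R : Type*} [Zero R] (a d : R) : diagonal ![a, d] = !![a, 0; 0, d] := by
  ext k l
  fin_cases k <;> fin_cases l <;> rfl

lemma of_fin_two_add_single_zero_one {R : Type*} [AddZeroClass R] (a b c d x : R) :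
    !![a, b; c, d] + single 0 1 x = !![a, b + x; c, d] := by
  ext k l
  fin_cases k <;> fin_cases l <;> simp

variable {K m : Type*} [Field K] [Fintype m] [DecidableEq m] {D : m → K} {i j : m}

lemma diagonal_mul_transvection_div (hi : D i ≠ 0) (a : K) :
    diagonal D * transvection i j (a / D i) = diagonal D + single i j a := by
  rw [transvection, mul_add, mul_one, diagonal_mul_single, mul_div_cancel₀ _ hi]

lemma transvection_mul_diagonal (hi : D i ≠ 0) (x : K) :
    transvection i j x * diagonal D = diagonal D * transvection i j (x * (D j / D i)) := by
  rw [← mul_div_assoc, diagonal_mul_transvection_div hi, transvection, add_mul, one_mul,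
    single_mul_diagonal]

lemma transvection_mul_diagonal_pow (hi : D i ≠ 0) (x : K) (n : ℕ) :
    transvection i j x * diagonal D ^ n =
      diagonal D ^ n * transvection i j (x * (D j / D i) ^ n) := by
  have hin : (D ^ n) i ≠ 0 := pow_ne_zero n hi
  rw [diagonal_pow, transvection_mul_diagonal hin, Pi.pow_apply, Pi.pow_apply, div_pow]

/-- The parameter `x` for which the product of the matrices `diagonal D + single i j (a k)` equals
`diagonal D ^ n * transvection i j x`, where `c = D i` and `d = D j`. The exponent `k.rev` counts
the factors to the right of the `k`-th one. -/
def shearParameter (c d : K) {n : ℕ} (a : Fin n → K) : K :=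
  ∑ k, a k / c * (d / c) ^ (k.rev : ℕ)

lemma shearParameter_succ (c d : K) {n : ℕ} (a : Fin (n + 1) → K) :
    shearParameter c d a =
      a 0 / c * (d / c) ^ n + shearParameter c d fun k => a k.succ := by
  simp [shearParameter, Fin.sum_univ_succ]

lemma prod_ofFn_diagonal_add_single (hij : i ≠ j) (hi : D i ≠ 0) {n : ℕ} (a : Fin n → K) :
    (List.ofFn fun k => diagonal D + single i j (a k)).prod =
      diagonal D ^ n * transvection i j (shearParameter (D i) (D j) a) := by
  induction n with
  | zero => simp [shearParameter]
  | succ n ih =>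
    let y := shearParameter (D i) (D j) fun k => a k.succ
    calc (List.ofFn fun k => diagonal D + single i j (a k)).prod
        = (diagonal D + single i j (a 0)) * (diagonal D ^ n * transvection i j y) := by
          rw [List.ofFn_succ, List.prod_cons, ih]
      _ = diagonal D * (transvection i j (a 0 / D i) * diagonal D ^ n) * transvection i j y := by
          rw [← diagonal_mul_transvection_div hi]
          simp only [mul_assoc]
      _ = diagonal D ^ (n + 1) *
            (transvection i j (a 0 / D i * (D j / D i) ^ n) * transvection i j y) := by
          rw [transvection_mul_diagonal_pow hi, pow_succ']
          simp only [mul_assoc]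
      _ = diagonal D ^ (n + 1) * transvection i j (shearParameter (D i) (D j) a) := by
          rw [transvection_mul_transvection_same i j hij, shearParameter_succ]

lemma inv_diagonal_pow_mul_prod_ofFn (hij : i ≠ j) (hD : ∀ k, D k ≠ 0) {n : ℕ} (a : Fin n → K) :
    (diagonal D)⁻¹ ^ n * (List.ofFn fun k => diagonal D + single i j (a k)).prod =
      transvection i j (shearParameter (D i) (D j) a) := by
  have hdet : IsUnit (diagonal D ^ n).det := by
    simp [hD, Finset.prod_ne_zero_iff]
  rw [prod_ofFn_diagonal_add_single hij (hD i), inv_pow', nonsing_inv_mul_cancel_left _ _ hdet]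

end DiagonalTransvection

lemma norm_shearParameter_le {𝕜 : Type*} [NormedField 𝕜] {c d : 𝕜} (hdc : ‖d‖ < ‖c‖) {M : ℝ}
    (hM : 0 ≤ M) {n : ℕ} {a : Fin n → 𝕜} (ha : ∀ k, ‖a k‖ ≤ M) :
    ‖shearParameter c d a‖ ≤ M / (‖c‖ - ‖d‖) := by
  have hc : 0 < ‖c‖ := (norm_nonneg d).trans_lt hdc
  have hr : ‖d‖ / ‖c‖ < 1 := (div_lt_one hc).2 hdc
  have hr0 : 0 ≤ ‖d‖ / ‖c‖ := by positivity
  calc ‖shearParameter c d a‖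
      ≤ ∑ k : Fin n, M / ‖c‖ * (‖d‖ / ‖c‖) ^ (k.rev : ℕ) := by
        refine norm_sum_le_of_le _ fun k _ => ?_
        rw [norm_mul, norm_pow, norm_div, norm_div]
        gcongr
        exact ha k
    _ = M / ‖c‖ * ∑ k ∈ Finset.range n, (‖d‖ / ‖c‖) ^ k := by
        rw [← Finset.mul_sum, ← Fin.sum_univ_eq_sum_range, ← Equiv.sum_comp Fin.revPerm]
        simp only [Fin.revPerm_apply, Fin.rev_rev]
    _ ≤ M / ‖c‖ * (1 - ‖d‖ / ‖c‖)⁻¹ := by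
        gcongr
        exact sum_le_hasSum _ (fun k _ => pow_nonneg hr0 k) (hasSum_geometric_of_lt_one hr0 hr)
    _ = M / (‖c‖ - ‖d‖) := by
        rw [← div_eq_mul_inv, div_div, mul_sub, mul_one, mul_div_cancel₀ _ hc.ne']

section Balls

open Matrix
open scoped ENNReal

variable {𝕜 m : Type*} [NormedField 𝕜] [Fintype m] [DecidableEq m] {p : ℝ≥0∞}
  {i j : m} {x : 𝕜} {r : ℝ}

lemma toLpLin_transvection_apply (v : PiLp p fun _ : m => 𝕜) :
    toLpLin p p (transvection i j x) v = v + PiLp.single p i (x * v j) := by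
  ext k
  simp [transvection, single_mulVec_eq, Pi.single_apply]

variable [Fact (1 ≤ p)]

lemma norm_toLpLin_transvection_le (v : PiLp p fun _ : m => 𝕜) :
    ‖toLpLin p p (transvection i j x) v‖ ≤ (1 + ‖x‖) * ‖v‖ := by
  calc ‖toLpLin p p (transvection i j x) v‖
      ≤ ‖v‖ + ‖x‖ * ‖v j‖ := by
        rw [toLpLin_transvection_apply, ← norm_mul, ← PiLp.norm_single p (fun _ : m => 𝕜) i]
        exact norm_add_le _ _
    _ ≤ ‖v‖ + ‖x‖ * ‖v‖ := by
        gcongr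
        exact PiLp.norm_apply_le v j
    _ = (1 + ‖x‖) * ‖v‖ := by ring

lemma toLpLin_transvection_image_closedBall_subset (hr : 1 + ‖x‖ ≤ r) :
    toLpLin p p (transvection i j x) '' closedBall (0 : PiLp p fun _ : m => 𝕜) 1 ⊆
      closedBall 0 r := by
  rintro _ ⟨v, hv, rfl⟩
  rw [mem_closedBall_zero_iff] at hv ⊢
  calc ‖toLpLin p p (transvection i j x) v‖ ≤ (1 + ‖x‖) * ‖v‖ := norm_toLpLin_transvection_le v
    _ ≤ (1 + ‖x‖) * 1 := by gcongr
    _ ≤ r := by rwa [mul_one]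

lemma closedBall_subset_toLpLin_transvection_image (hij : i ≠ j) (hr : 1 + ‖x‖ ≤ r) :
    closedBall (0 : PiLp p fun _ : m => 𝕜) r⁻¹ ⊆
      toLpLin p p (transvection i j x) '' closedBall 0 1 := by
  intro v hv
  have hr0 : 0 < r := by linarith [norm_nonneg x]
  rw [mem_closedBall_zero_iff] at hv
  refine ⟨toLpLin p p (transvection i j (-x)) v, mem_closedBall_zero_iff.2 ?_, ?_⟩
  · calc ‖toLpLin p p (transvection i j (-x)) v‖
        ≤ (1 + ‖-x‖) * ‖v‖ := norm_toLpLin_transvection_le v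
      _ ≤ r * r⁻¹ := by
          rw [norm_neg]
          gcongr
      _ = 1 := mul_inv_cancel₀ hr0.ne'
  · rw [← LinearMap.comp_apply, ← toLpLin_mul_same, transvection_mul_transvection_same i j hij,
      add_neg_cancel, transvection_zero, toLpLin_one, LinearMap.id_apply]

theorem triangular_products_ball_bounds_general {ι : Type*} {D : m → 𝕜} (hD : ∀ k, D k ≠ 0)
    (hij : ‖D j‖ < ‖D i‖) {e : ι → 𝕜} (he : Bornology.IsBounded (range e)) :
    ∃ lam : ℝ, 1 < lam ∧ ∀ (n : ℕ) (I : Fin n → ι),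
      closedBall (0 : PiLp p fun _ : m => 𝕜) lam⁻¹ ⊆
        toLpLin p p ((diagonal D)⁻¹ ^ n *
          (List.ofFn fun k => diagonal D + single i j (e (I k))).prod) '' closedBall 0 1 ∧
      toLpLin p p ((diagonal D)⁻¹ ^ n *
          (List.ofFn fun k => diagonal D + single i j (e (I k))).prod) '' closedBall 0 1 ⊆
        closedBall (0 : PiLp p fun _ : m => 𝕜) lam := by
  obtain ⟨M, hM0, hM⟩ := he.exists_pos_norm_le
  have hne : i ≠ j := by
    rintro rfl
    exact hij.false
  refine ⟨1 + M / (‖D i‖ - ‖D j‖), lt_add_of_pos_right 1 (div_pos hM0 (sub_pos.2 hij)),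
    fun n I => ?_⟩
  have hx : 1 + ‖shearParameter (D i) (D j) fun k => e (I k)‖ ≤ 1 + M / (‖D i‖ - ‖D j‖) := by
    gcongr
    exact norm_shearParameter_le hij hM0.le fun k => hM _ (mem_range_self (I k))
  rw [inv_diagonal_pow_mul_prod_ofFn hne hD]
  exact ⟨closedBall_subset_toLpLin_transvection_image hne hx,
    toLpLin_transvection_image_closedBall_subset hx⟩

end Balls

/-- For upper triangular matrices `T_i = [[c, e_i], [0, d]]` with common diagonal
`c > d > 0` and `T = diag(c, d)`, there is `λ > 1` such that for every word
`I = i_1…i_n`, `B(0, λ⁻¹) ⊆ T^{-n} T_I(B(0,1)) ⊆ B(0, λ)`. -/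
theorem triangular_products_ball_bounds {ℓ : ℕ} (c d : ℝ) (hd : 0 < d) (hdc : d < c)
    (e : Fin ℓ → ℝ) :
    ∃ lam : ℝ, 1 < lam ∧ ∀ (n : ℕ) (I : Fin n → Fin ℓ),
      Metric.closedBall (0 : EuclideanSpace ℝ (Fin 2)) lam⁻¹ ⊆
        Matrix.toEuclideanLin ((!![c, 0; 0, d])⁻¹ ^ n *
          (List.ofFn fun j => !![c, e (I j); 0, d]).prod) '' Metric.closedBall 0 1 ∧
      Matrix.toEuclideanLin ((!![c, 0; 0, d])⁻¹ ^ n *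
          (List.ofFn fun j => !![c, e (I j); 0, d]).prod) '' Metric.closedBall 0 1 ⊆
        Metric.closedBall (0 : EuclideanSpace ℝ (Fin 2)) lam := by
  have hc : 0 < c := hd.trans hdc
  simpa only [diagonal_fin_two, of_fin_two_add_single_zero_one, zero_add] using
    triangular_products_ball_bounds_general (p := 2) (D := ![c, d]) (i := 0) (j := 1)
      (by simp [Fin.forall_fin_two, hc.ne', hd.ne']) (by simpa [abs_of_pos, hc, hd] using hdc)
      (finite_range e).isBounded
end
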